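/- arXiv:1006.2281 — 11 statements merged into one kernel-verified Lean document; each statement's English description precedes it below -/
import Mathlib

section
/- Let d ≥ 1 and let b, c be real symmetric d×d matrices, regarded as complex matrices via the entrywise coercion ℝ → ℂ. If b is positive semidefinite or c is positive semidefinite, then the complex matrix I_d + i·(b·c) is invertible. Moreover, if b is positive definite, then the complex matrix b + i·c is invertible. -/
open Matrix Complex

/-!
If `a ≥ 0`, write `a = s * s` with `s` self-adjoint. Away from `0` the spectrum of
`a * b = s * (s * b)` is that of the self-adjoint element `s * b * s`, so it is real. In particular
it does not contain `I`, which says that `1 + I • (a * b)` is invertible. For invertible `a` one has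
`a + I • b = a * (1 + I • (a⁻¹ * b))` with `a⁻¹ ≥ 0`.
-/

lemma isUnit_one_add_I_smul_iff {A : Type*} [Ring A] [Algebra ℂ A] {a : A} :
    IsUnit (1 + I • a) ↔ I ∉ spectrum ℂ a := by
  have factor : algebraMap ℂ A I - a = algebraMap ℂ A I * (1 + I • a) := by
    rw [← Algebra.smul_def, smul_add, smul_smul, I_mul_I, neg_one_smul, sub_eq_add_neg,
      Algebra.algebraMap_eq_smul_one]
  have isUnit_I : IsUnit (algebraMap ℂ A I) := I_ne_zero.isUnit.map _
  rw [spectrum.notMem_iff, factor, isUnit_I.mul_left_iff]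

section CStarAlgebra

variable {A : Type*} [CStarAlgebra A] [PartialOrder A] [StarOrderedRing A] {a b : A} {z : ℂ}

lemma im_eq_zero_of_mem_spectrum_mul_of_nonneg_left (ha : 0 ≤ a) (hb : IsSelfAdjoint b)
    (hz : z ∈ spectrum ℂ (a * b)) : z.im = 0 := by
  obtain rfl | hz₀ := eq_or_ne z 0
  · exact zero_im
  obtain ⟨s, hs, rfl⟩ := CStarAlgebra.nonneg_iff_exists_isSelfAdjoint_and_eq_mul_self.mp ha
  have hz_conj : z ∈ spectrum ℂ (s * b * s) \ {0} := by
    rw [← spectrum.nonzero_mul_comm, ← mul_assoc]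
    exact ⟨hz, hz₀⟩
  exact (hb.conjugate_self hs).im_eq_zero_of_mem_spectrum hz_conj.1

lemma im_eq_zero_of_mem_spectrum_mul_of_nonneg_right (ha : IsSelfAdjoint a) (hb : 0 ≤ b)
    (hz : z ∈ spectrum ℂ (a * b)) : z.im = 0 := by
  have hz_star : star z ∈ spectrum ℂ (b * a) := by
    rwa [← hb.isSelfAdjoint.star_eq, ← ha.star_eq, ← star_mul, spectrum.map_star,
      Set.star_mem_star]
  simpa using im_eq_zero_of_mem_spectrum_mul_of_nonneg_left hb ha hz_star

lemma isUnit_one_add_I_smul_mul (ha : IsSelfAdjoint a) (hb : IsSelfAdjoint b)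
    (hab : 0 ≤ a ∨ 0 ≤ b) : IsUnit (1 + I • (a * b)) := by
  refine isUnit_one_add_I_smul_iff.mpr fun hI ↦ one_ne_zero (α := ℝ) ?_
  rw [← I_im]
  obtain ha₀ | hb₀ := hab
  · exact im_eq_zero_of_mem_spectrum_mul_of_nonneg_left ha₀ hb hI
  · exact im_eq_zero_of_mem_spectrum_mul_of_nonneg_right ha hb₀ hI

lemma isUnit_add_I_smul (ha : IsStrictlyPositive a) (hb : IsSelfAdjoint b) :
    IsUnit (a + I • b) := by
  have factor : a + I • b = a * (1 + I • (Ring.inverse a * b)) := by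
    rw [mul_add, mul_one, mul_smul_comm, Ring.mul_inverse_cancel_left _ _ ha.isUnit]
  have inverse_pos : IsStrictlyPositive (Ring.inverse a) := ha.ringInverse
  rw [factor]
  exact ha.isUnit.mul <|
    isUnit_one_add_I_smul_mul inverse_pos.isSelfAdjoint hb (.inl inverse_pos.nonneg)

theorem stmt_0_general (ha : IsSelfAdjoint a) (hb : IsSelfAdjoint b) :
    (0 ≤ a ∨ 0 ≤ b → IsUnit (1 + I • (a * b))) ∧
      (IsStrictlyPositive a → IsUnit (a + I • b)) :=
  ⟨isUnit_one_add_I_smul_mul ha hb, fun ha_pos ↦ isUnit_add_I_smul ha_pos hb⟩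

end CStarAlgebra

section MatrixMap

variable {n : Type*} [Finite n]

open scoped MatrixOrder ComplexOrder

lemma posSemidef_map {𝕜 R F : Type*} [RCLike 𝕜] [Ring R] [PartialOrder R] [StarRing R]
    [StarOrderedRing R] [FunLike F 𝕜 R] [RingHomClass F 𝕜 R] [StarHomClass F 𝕜 R] (f : F)
    {M : Matrix n n 𝕜} (hM : M.PosSemidef) : (M.map f).PosSemidef := by
  classical
  cases nonempty_fintype n
  obtain ⟨N, rfl⟩ := CStarAlgebra.nonneg_iff_eq_star_mul_self.mp hM.nonneg
  rw [star_eq_conjTranspose, Matrix.map_mul, conjTranspose_map f (map_star f)]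
  exact posSemidef_conjTranspose_mul_self _

lemma posDef_map {𝕜 𝕜' F : Type*} [RCLike 𝕜] [RCLike 𝕜'] [FunLike F 𝕜 𝕜']
    [RingHomClass F 𝕜 𝕜'] [StarHomClass F 𝕜 𝕜'] (f : F) {M : Matrix n n 𝕜} (hM : M.PosDef) :
    (M.map f).PosDef := by
  classical
  cases nonempty_fintype n
  rw [(posSemidef_map f hM.posSemidef).posDef_iff_isUnit]
  exact hM.isUnit.map (f : 𝕜 →+* 𝕜').mapMatrix

end MatrixMap

/-- For real symmetric `d×d` matrices `b, c` (viewed in `ℂ` entrywise):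
if `b` or `c` is positive semidefinite then `I + i·(b·c)` is invertible; moreover if `b` is
positive definite then `b + i·c` is invertible. -/
theorem stmt_0 (d : ℕ) (hd : 1 ≤ d) (b c : Matrix (Fin d) (Fin d) ℝ)
    (hb : b.IsSymm) (hc : c.IsSymm) :
    ((b.PosSemidef ∨ c.PosSemidef) →
      IsUnit ((1 : Matrix (Fin d) (Fin d) ℂ) +
        Complex.I • (b.map (Complex.ofReal) * c.map (Complex.ofReal)))) ∧
    (b.PosDef →
      IsUnit (b.map (Complex.ofReal) + Complex.I • c.map (Complex.ofReal))) := by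
  have isSelfAdjoint_map {M : Matrix (Fin d) (Fin d) ℝ} (hM : M.IsSymm) :
      IsSelfAdjoint (M.map ofReal) :=
    (isHermitian_iff_isSymm.mpr hM).map ofReal fun x ↦ (conj_ofReal x).symm
  open scoped MatrixOrder ComplexOrder Matrix.Norms.L2Operator in
  have nonneg_map {M : Matrix (Fin d) (Fin d) ℝ} (hM : M.PosSemidef) : 0 ≤ M.map ofReal :=
    (posSemidef_map (RCLike.ofRealStarAlgHom ℂ) hM).nonneg
  obtain ⟨hmul, hadd⟩ := stmt_0_general (isSelfAdjoint_map hb) (isSelfAdjoint_map hc)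
  exact ⟨fun h ↦ hmul (h.imp nonneg_map nonneg_map),
    fun h ↦ hadd (posDef_map (RCLike.ofRealStarAlgHom ℂ) h).isStrictlyPositive⟩
end

section
/- Let q be a real symmetric positive semidefinite d×d matrix of rank r. Then there exist a d×d permutation matrix p, an invertible lower triangular r×r real matrix c_r, and a (d−r)×r real matrix k_r such that p q pᵀ = c cᵀ, where c is the d×d matrix with block form c = [[c_r, 0], [k_r, 0]]. Moreover, the matrix c̃ = [[c_r, 0], [k_r, I_{d−r}]] is invertible and q = (c̃ᵀ p)ᵀ · I_d^r · (c̃ᵀ p), where I_d^r is the d×d diagonal matrix whose first r diagonal entries are 1 and all other entries are 0 (extended Cholesky decomposition). -/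
open Matrix

/-! Write `q = Bᴴ * B` and choose columns of `B` that form a basis of its column space, so that
`B = F * X`, where `F` has independent columns and `X` is the identity on the chosen indices. The
Gram matrix `Fᴴ * F` is positive definite, and its Cholesky factor `c` gives `q = L * Lᴴ` for
`L = Xᴴ * c`, whose rows at the chosen indices are those of `c`. The permutation moves these
rows to the top. -/

section ColumnBasis

variable {m n K : Type*} [Field K] [Fintype n]

theorem mul_left_cancel_of_linearIndependent_col {l R : Type*} [CommSemiring R] {F : Matrix m n R}
    (hF : LinearIndependent R F.col) {X Y : Matrix n l R} (h : F * X = F * Y) : X = Y :=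
  ext_col fun j ↦ mulVec_injective_iff.2 hF <| funext fun i ↦ congrFun₂ h i j

theorem exists_linearIndependent_submatrix_mul_eq (B : Matrix m n K) :
    ∃ (f : Fin B.rank → n) (X : Matrix (Fin B.rank) n K),
      LinearIndependent K (B.submatrix id f).col ∧ B.submatrix id f * X = B := by
  have : Module.Finite K (Submodule.span K (Set.range B.col)) :=
    .span_of_finite K (Set.finite_range _)
  rw [B.rank_eq_finrank_span_cols]
  obtain ⟨b, hb, hspan, hli⟩ := Submodule.exists_fun_fin_finrank_span_eq K (Set.range B.col)
  choose f hf using hb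
  have hcol : (B.submatrix id f).col = b := funext hf
  have hmem (j : n) : B.col j ∈ Submodule.span K (Set.range b) :=
    hspan.symm ▸ Submodule.subset_span (Set.mem_range_self j)
  choose x hx using fun j ↦ (Submodule.mem_span_range_iff_exists_fun K).1 (hmem j)
  refine ⟨f, (of x)ᵀ, hcol ▸ hli, ext_col fun j ↦ ?_⟩
  calc (B.submatrix id f * (of x)ᵀ).col j = B.submatrix id f *ᵥ x j := rfl
    _ = ∑ i, x j i • b i := by simp only [mulVec_eq_sum, op_smul_eq_smul, ← hcol]; rfl
    _ = B.col j := hx j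

end ColumnBasis

section Cholesky

open scoped ComplexOrder

variable {n 𝕜 : Type*} [RCLike 𝕜]

theorem exists_isUnit_mul_star_eq_of_pos {z : 𝕜} (hz : 0 < z) :
    ∃ w : 𝕜, IsUnit w ∧ w * star w = z := by
  obtain ⟨x, hx, rfl⟩ := RCLike.pos_iff_exists_ofReal.1 hz
  refine ⟨(√x : ℝ), by simpa using (Real.sqrt_pos.2 hx).ne', ?_⟩
  simp [← RCLike.ofReal_mul, Real.mul_self_sqrt hx.le]

section LDL

variable [Fintype n] [LinearOrder n] [LocallyFiniteOrderBot n] {S : Matrix n n 𝕜}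

theorem ldl_lower_blockTriangular (hS : S.PosDef) :
    (LDL.lower hS).BlockTriangular OrderDual.toDual :=
  blockTriangular_inv_of_blockTriangular fun _ _ hij ↦ LDL.lowerInv_triangular hS hij

theorem ldl_diagEntries_pos (hS : S.PosDef) (i : n) : 0 < LDL.diagEntries hS i := by
  have hdiag : (LDL.diag hS).PosDef := by
    rw [LDL.diag_eq_lowerInv_conj]
    exact hS.mul_mul_conjTranspose_same (vecMul_injective_of_isUnit (isUnit_of_invertible _))
  exact posDef_diagonal_iff.1 hdiag i

theorem exists_cholesky_of_posDef (hS : S.PosDef) :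
    ∃ c : Matrix n n 𝕜, IsUnit c ∧ c.BlockTriangular OrderDual.toDual ∧ c * cᴴ = S := by
  choose w hw hwd using fun i ↦ exists_isUnit_mul_star_eq_of_pos (ldl_diagEntries_pos hS i)
  refine ⟨LDL.lower hS * diagonal w, ?_,
    (ldl_lower_blockTriangular hS).mul (blockTriangular_diagonal w), ?_⟩
  · exact (isUnit_nonsing_inv_iff.2 (isUnit_of_invertible _)).mul
      (isUnit_diagonal.2 (Pi.isUnit_iff.2 hw))
  · have hdiag : diagonal w * (diagonal w)ᴴ = LDL.diag hS := by
      rw [diagonal_conjTranspose, diagonal_mul_diagonal]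
      exact congrArg diagonal (funext hwd)
    calc LDL.lower hS * diagonal w * (LDL.lower hS * diagonal w)ᴴ
      _ = LDL.lower hS * (diagonal w * (diagonal w)ᴴ) * (LDL.lower hS)ᴴ := by
        simp only [conjTranspose_mul, Matrix.mul_assoc]
      _ = S := by rw [hdiag, LDL.lower_conj_diag]

end LDL

open scoped MatrixOrder in
theorem exists_conjTranspose_mul_self_eq_of_posSemidef [Fintype n] {q : Matrix n n 𝕜}
    (hq : q.PosSemidef) : ∃ B : Matrix n n 𝕜, Bᴴ * B = q := by
  classical
  obtain ⟨B, hB⟩ := CStarAlgebra.nonneg_iff_eq_star_mul_self.1 hq.nonneg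
  exact ⟨B, hB.symm⟩

theorem exists_pivoted_cholesky_of_posSemidef [Fintype n] {q : Matrix n n 𝕜} (hq : q.PosSemidef) :
    ∃ (f : Fin q.rank → n) (L : Matrix n (Fin q.rank) 𝕜), f.Injective ∧
      IsUnit (L.submatrix f id) ∧ (L.submatrix f id).BlockTriangular OrderDual.toDual ∧
      L * Lᴴ = q := by
  obtain ⟨B, rfl⟩ := exists_conjTranspose_mul_self_eq_of_posSemidef hq
  rw [rank_conjTranspose_mul_self]
  obtain ⟨f, X, hF, hFX⟩ := exists_linearIndependent_submatrix_mul_eq B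
  set F := B.submatrix id f
  have hXf : X.submatrix id f = 1 := by
    refine mul_left_cancel_of_linearIndependent_col hF ?_
    rw [Matrix.mul_one]
    exact congrArg (submatrix · id f) hFX
  obtain ⟨c, hc, hlower, hcF⟩ :=
    exists_cholesky_of_posDef (PosDef.conjTranspose_mul_self F (mulVec_injective_iff.2 hF))
  have hLf : (Xᴴ * c).submatrix f id = c := by
    calc (Xᴴ * c).submatrix f id = (X.submatrix id f)ᴴ * c := rfl
      _ = c := by rw [hXf, conjTranspose_one, Matrix.one_mul]
  refine ⟨f, Xᴴ * c, .of_comp (f := B.col) hF.injective, hLf.symm ▸ hc, hLf.symm ▸ hlower, ?_⟩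
  calc Xᴴ * c * (Xᴴ * c)ᴴ = Xᴴ * (c * cᴴ) * X := by
        simp only [conjTranspose_mul, conjTranspose_conjTranspose, Matrix.mul_assoc]
    _ = (F * X)ᴴ * (F * X) := by simp only [hcF, conjTranspose_mul, Matrix.mul_assoc]
    _ = Bᴴ * B := by rw [hFX]

end Cholesky

section Blocks

variable {m n κ R : Type*} [Fintype m] [Fintype n] [Fintype κ]

theorem permMatrix_mul_mul_conjTranspose [DecidableEq n] [NonAssocSemiring R] [StarRing R]
    (σ : Equiv.Perm n) (q : Matrix n n R) :
    σ.permMatrix R * q * (σ.permMatrix R)ᴴ = q.submatrix σ σ := by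
  rw [conjTranspose_permMatrix, PEquiv.toMatrix_toPEquiv_mul, PEquiv.mul_toMatrix_toPEquiv]
  rfl

theorem fromBlocks_zero_mul_conjTranspose {l o : Type*} [Semiring R] [StarRing R]
    (c : Matrix l m R) (k : Matrix o m R) :
    fromBlocks c (0 : Matrix l κ R) k 0 * (fromBlocks c (0 : Matrix l κ R) k 0)ᴴ =
      fromRows c k * (fromRows c k)ᴴ := by
  rw [← fromCols_fromRows_eq_fromBlocks, conjTranspose_fromCols_eq_fromRows_conjTranspose,
    fromCols_mul_fromRows, fromRows_zero, Matrix.zero_mul, add_zero]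

theorem fromBlocks_zero₁₂_mul_mul_conjTranspose {l o : Type*} [DecidableEq m] [Semiring R]
    [StarRing R] (c : Matrix l m R) (k : Matrix o m R) (b : Matrix o κ R) :
    fromBlocks c 0 k b * (fromBlocks 1 0 0 0 : Matrix (m ⊕ κ) (m ⊕ κ) R) *
        (fromBlocks c 0 k b)ᴴ =
      fromBlocks c (0 : Matrix l κ R) k 0 * (fromBlocks c (0 : Matrix l κ R) k 0)ᴴ := by
  simp [fromBlocks_conjTranspose, fromBlocks_multiply]

theorem reindex_fromBlocks_one_zero_eq_of_ite [Zero R] [One R] {d r : ℕ} (hrd : r ≤ d) :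
    reindex (finSumFinEquiv.trans (finCongr (Nat.add_sub_cancel' hrd)))
        (finSumFinEquiv.trans (finCongr (Nat.add_sub_cancel' hrd)))
        (fromBlocks (1 : Matrix (Fin r) (Fin r) R) 0 0 (0 : Matrix (Fin (d - r)) (Fin (d - r)) R)) =
      of fun i j : Fin d ↦ if i = j ∧ (i : ℕ) < r then 1 else 0 := by
  set e : Fin r ⊕ Fin (d - r) ≃ Fin d :=
    finSumFinEquiv.trans (finCongr (Nat.add_sub_cancel' hrd)) with he
  ext i j
  obtain ⟨x, rfl⟩ := e.surjective i
  obtain ⟨y, rfl⟩ := e.surjective j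
  simp only [of_apply, e.apply_eq_iff_eq]
  rcases x with x | x <;> rcases y with y | y <;> simp [one_apply, he]

end Blocks

section ExtendedCholesky

open scoped ComplexOrder

theorem exists_perm_submatrix_eq_fromRows_mul_conjTranspose {n κ 𝕜 : Type*} [RCLike 𝕜] [Fintype n]
    {q : Matrix n n 𝕜} (hq : q.PosSemidef) (e : Fin q.rank ⊕ κ ≃ n) :
    ∃ (σ : Equiv.Perm n) (c : Matrix (Fin q.rank) (Fin q.rank) 𝕜) (k : Matrix κ (Fin q.rank) 𝕜),
      IsUnit c ∧ c.BlockTriangular OrderDual.toDual ∧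
      q.submatrix σ σ = reindex e e (fromRows c k * (fromRows c k)ᴴ) := by
  obtain ⟨f, L, hf, hunit, hlower, hL⟩ := exists_pivoted_cholesky_of_posSemidef hq
  obtain ⟨σ, hσ⟩ := Equiv.Perm.exists_extending_pair (e ∘ Sum.inl) f
    (e.injective.comp Sum.inl_injective) hf
  set M := L.submatrix (σ ∘ e) id
  have hM₁ : M.toRows₁ = L.submatrix f id := by ext i j; simp [M, ← hσ]
  have hM : fromRows (L.submatrix f id) M.toRows₂ = M := by rw [← hM₁, fromRows_toRows]
  refine ⟨σ, L.submatrix f id, M.toRows₂, hunit, hlower, ?_⟩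
  rw [hM]
  ext
  simp [← hL, M, mul_apply]

theorem stmt_1_general {n κ 𝕜 : Type*} [RCLike 𝕜] [Fintype n] [DecidableEq n]
    [DecidableEq κ] {r : ℕ} (e : Fin r ⊕ κ ≃ n) {q : Matrix n n 𝕜} (hq : q.PosSemidef)
    (hr : q.rank = r) :
    ∃ (σ : Equiv.Perm n) (c_r : Matrix (Fin r) (Fin r) 𝕜) (k_r : Matrix κ (Fin r) 𝕜),
      IsUnit c_r ∧ c_r.BlockTriangular OrderDual.toDual ∧
      (let p : Matrix n n 𝕜 := σ.permMatrix 𝕜;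
       let c : Matrix n n 𝕜 := reindex e e (fromBlocks c_r 0 k_r 0);
       let ctilde : Matrix n n 𝕜 := reindex e e (fromBlocks c_r 0 k_r 1);
       let Idr : Matrix n n 𝕜 := reindex e e (fromBlocks 1 0 0 0);
       p * q * pᴴ = c * cᴴ ∧ IsUnit ctilde ∧
         q = (ctildeᴴ * p)ᴴ * Idr * (ctildeᴴ * p)) := by
  subst hr
  have : Finite κ := .of_injective (e ∘ Sum.inr) (e.injective.comp Sum.inr_injective)
  have := Fintype.ofFinite κ
  obtain ⟨σ, c_r, k_r, hunit, hlower, hσ⟩ :=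
    exists_perm_submatrix_eq_fromRows_mul_conjTranspose hq e
  refine ⟨σ, c_r, k_r, hunit, hlower, ?_⟩
  intro p c ctilde Idr
  have hfactor : p * q * pᴴ = c * cᴴ := by
    calc p * q * pᴴ = q.submatrix σ σ := permMatrix_mul_mul_conjTranspose σ q
      _ = reindex e e (fromRows c_r k_r * (fromRows c_r k_r)ᴴ) := hσ
      _ = c * cᴴ := by
        simp only [c, reindex_apply, conjTranspose_submatrix, submatrix_mul_equiv,
          fromBlocks_zero_mul_conjTranspose]
  have hctilde : ctilde * Idr * ctildeᴴ = c * cᴴ := by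
    simp only [ctilde, Idr, c, reindex_apply, conjTranspose_submatrix, submatrix_mul_equiv,
      fromBlocks_zero₁₂_mul_mul_conjTranspose]
  have hp : pᴴ * p = 1 := by
    rw [conjTranspose_permMatrix, ← permMatrix_mul, mul_inv_cancel, permMatrix_one]
  refine ⟨hfactor, ?_, ?_⟩
  · exact (isUnit_submatrix_equiv _ _).2 (isUnit_fromBlocks_zero₁₂.2 ⟨hunit, isUnit_one⟩)
  · calc q = (pᴴ * p) * q * (pᴴ * p) := by rw [hp, Matrix.one_mul, Matrix.mul_one]
      _ = pᴴ * (p * q * pᴴ) * p := by simp only [Matrix.mul_assoc]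
      _ = pᴴ * (ctilde * Idr * ctildeᴴ) * p := by rw [hfactor, hctilde]
      _ = (ctildeᴴ * p)ᴴ * Idr * (ctildeᴴ * p) := by
        simp only [conjTranspose_mul, conjTranspose_conjTranspose, Matrix.mul_assoc]

end ExtendedCholesky

/-- **extended Cholesky decomposition.**
A real symmetric positive semidefinite `d×d` matrix `q` of rank `r` can be written as
`p q pᵀ = c cᵀ` with `p` a permutation matrix and `c = [[c_r, 0],[k_r, 0]]`, `c_r`
invertible lower triangular; moreover `c̃ = [[c_r, 0],[k_r, I]]` is invertible and
`q = (c̃ᵀ p)ᵀ · I_d^r · (c̃ᵀ p)`. -/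
theorem stmt_1 (d r : ℕ) (q : Matrix (Fin d) (Fin d) ℝ) (hq : q.PosSemidef)
    (hr : q.rank = r) (hrd : r ≤ d) :
    ∃ (σ : Equiv.Perm (Fin d)) (c_r : Matrix (Fin r) (Fin r) ℝ)
      (k_r : Matrix (Fin (d - r)) (Fin r) ℝ),
      IsUnit c_r ∧ (∀ i j : Fin r, i < j → c_r i j = 0) ∧
      (let e : Fin r ⊕ Fin (d - r) ≃ Fin d :=
        finSumFinEquiv.trans (finCongr (Nat.add_sub_cancel' hrd));
       let p : Matrix (Fin d) (Fin d) ℝ := σ.permMatrix ℝ;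
       let c : Matrix (Fin d) (Fin d) ℝ :=
         Matrix.reindex e e (Matrix.fromBlocks c_r 0 k_r 0);
       let ctilde : Matrix (Fin d) (Fin d) ℝ :=
         Matrix.reindex e e (Matrix.fromBlocks c_r 0 k_r 1);
       let Idr : Matrix (Fin d) (Fin d) ℝ :=
         Matrix.of fun i j => if i = j ∧ (i : ℕ) < r then (1 : ℝ) else 0;
       p * q * pᵀ = c * cᵀ ∧ IsUnit ctilde ∧
         q = (ctildeᵀ * p)ᵀ * Idr * (ctildeᵀ * p)) := by
  obtain ⟨σ, c_r, k_r, hunit, hlower, h⟩ :=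
    stmt_1_general (finSumFinEquiv.trans (finCongr (Nat.add_sub_cancel' hrd))) hq hr
  simp only [← conjTranspose_eq_transpose_of_trivial,
    ← reindex_fromBlocks_one_zero_eq_of_ite hrd]
  exact ⟨σ, c_r, k_r, hunit, fun _ _ hij ↦ hlower hij, h⟩
end

section
/- Let ᾱ be a real symmetric positive semidefinite d×d matrix, let a be a real d×d matrix, and let n = rank(aᵀ a). Then there exist a diagonal d×d matrix δ with nonnegative diagonal entries and an invertible d×d real matrix u such that ᾱ = uᵀ δ u and aᵀ a = uᵀ I_d^n u. -/
open Matrix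

/-!
Write `A + B = vᴴ E v`, with `v` invertible and `E` a projection; after the change of basis `v` we
may assume that `A + B = E`. Then `E A = A`, since `ker E = ker A ∩ ker B`. Hence an eigenvector of
`A + E` with nonzero eigenvalue is fixed by `E`, whereas one with eigenvalue zero is killed by `E`,
because `A` and `E` are both nonnegative. An orthonormal eigenbasis of `A + E` therefore
diagonalizes `E`, hence also `A` and `B = E - A`. Finally, rescaling and permuting the basis vectors
turns the diagonal form of `B` into the desired one.
-/

section Congruence

variable {n R : Type*} [Fintype n] [Semiring R] [StarRing R]

/-- The pairs `(A, B)` and `(A', B')`, read as Gram matrices of pairs of sesquilinear forms, differ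
by a common change of basis `u`. -/
def SimulCongruent [DecidableEq n] (A B A' B' : Matrix n n R) : Prop :=
  ∃ u : Matrix n n R, IsUnit u ∧ A = uᴴ * A' * u ∧ B = uᴴ * B' * u

variable [DecidableEq n] {A B A' B' A'' B'' : Matrix n n R}

lemma SimulCongruent.trans (h : SimulCongruent A B A' B') (h' : SimulCongruent A' B' A'' B'') :
    SimulCongruent A B A'' B'' := by
  obtain ⟨u, hu, rfl, rfl⟩ := h
  obtain ⟨v, hv, rfl, rfl⟩ := h'
  exact ⟨v * u, hv.mul hu, by simp only [conjTranspose_mul, Matrix.mul_assoc],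
    by simp only [conjTranspose_mul, Matrix.mul_assoc]⟩

lemma SimulCongruent.swap (h : SimulCongruent A B A' B') : SimulCongruent B A B' A' := by
  obtain ⟨u, hu, hA, hB⟩ := h
  exact ⟨u, hu, hB, hA⟩

lemma SimulCongruent.posSemidef_iff {R : Type*} [Ring R] [PartialOrder R] [StarRing R]
    {A B A' B' : Matrix n n R} (h : SimulCongruent A B A' B') :
    A.PosSemidef ↔ A'.PosSemidef := by
  obtain ⟨u, hu, rfl, -⟩ := h
  exact IsUnit.posSemidef_star_left_conjugate_iff hu

lemma SimulCongruent.rank_eq {R : Type*} [CommRing R] [StarRing R] {A B A' B' : Matrix n n R}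
    (h : SimulCongruent A B A' B') : A.rank = A'.rank := by
  obtain ⟨u, hu, rfl, -⟩ := h
  rw [rank_mul_eq_left_of_isUnit_det _ _ ((isUnit_iff_isUnit_det _).mp hu),
    rank_mul_eq_right_of_isUnit_det _ _ ((isUnit_iff_isUnit_det uᴴ).mp hu.star)]

lemma simulCongruent_of_mul_unitary_eq {U : Matrix n n R} (hU : U ∈ unitary (Matrix n n R))
    (hA : A * U = U * A') (hB : B * U = U * B') : SimulCongruent A B A' B' := by
  have conj {X X' : Matrix n n R} (h : X * U = U * X') : X = (star U)ᴴ * X' * star U := by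
    rw [← star_eq_conjTranspose, star_star, ← h, Matrix.mul_assoc,
      Unitary.mul_star_self_of_mem hU, Matrix.mul_one]
  exact ⟨star U, (Unitary.isUnit_coe (U := ⟨U, hU⟩)).star, conj hA, conj hB⟩

lemma simulCongruent_comp_perm (x y : n → R) (σ : Equiv.Perm n) :
    SimulCongruent (diagonal x) (diagonal y) (diagonal (x ∘ σ)) (diagonal (y ∘ σ)) := by
  have reindex (z : n → R) :
      diagonal z = (σ.permMatrix R)ᴴ * diagonal (z ∘ σ) * σ.permMatrix R := by
    rw [conjTranspose_permMatrix]
    ext i j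
    simp [Equiv.Perm.permMatrix, PEquiv.toMatrix_toPEquiv_mul, PEquiv.mul_toMatrix_toPEquiv,
      diagonal_apply]
  have hunit : IsUnit (σ.permMatrix R) := by
    simpa using (Group.isUnit σ⁻¹).map (permMatrixHom (R := R))
  exact ⟨σ.permMatrix R, hunit, reindex x, reindex y⟩

lemma exists_eq_conjTranspose_mul_mul {v : Matrix n n R} (hv : IsUnit v) (A : Matrix n n R) :
    ∃ A' : Matrix n n R, A = vᴴ * A' * v := by
  obtain ⟨w, -, hwv⟩ := isUnit_iff_exists.mp hv
  refine ⟨wᴴ * A * w, ?_⟩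
  calc A = (w * v)ᴴ * A * (w * v) := by simp [hwv]
    _ = vᴴ * (wᴴ * A * w) * v := by simp only [conjTranspose_mul, Matrix.mul_assoc]

end Congruence

section Diagonal

lemma exists_mul_eq_mul_diagonal {m n R : Type*} [Fintype m] [Fintype n] [DecidableEq n]
    [CommSemiring R] {A : Matrix m m R} {U : Matrix m n R}
    (h : ∀ j, ∃ c : R, A *ᵥ U.col j = c • U.col j) :
    ∃ x : n → R, A * U = U * diagonal x := by
  choose x hx using h
  refine ⟨x, ext fun i j ↦ ?_⟩
  rw [mul_diagonal, mul_comm]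
  exact congrFun (hx j) i

lemma exists_perm_comp_iff {n : Type*} [Fintype n] {p q : n → Prop}
    [DecidablePred p] [DecidablePred q]
    (h : Fintype.card {i // p i} = Fintype.card {i // q i}) :
    ∃ σ : Equiv.Perm n, ∀ i, q (σ i) ↔ p i := by
  classical
  rw [Fintype.card_subtype, Fintype.card_subtype] at h
  obtain ⟨σ, hσ⟩ := Equiv.Perm.exists_map_finset_eq _ _ h
  refine ⟨σ, fun i ↦ ?_⟩
  simpa using (Finset.ext_iff.mp hσ (σ i)).symm

end Diagonal

section RCLike

open scoped ComplexOrder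

variable {n 𝕜 : Type*} [Fintype n] [RCLike 𝕜] {A B E : Matrix n n 𝕜}

lemma add_mulVec_eq_zero_iff_of_posSemidef (hA : A.PosSemidef) (hB : B.PosSemidef) (v : n → 𝕜) :
    (A + B) *ᵥ v = 0 ↔ A *ᵥ v = 0 ∧ B *ᵥ v = 0 := by
  rw [← (hA.add hB).dotProduct_mulVec_zero_iff, ← hA.dotProduct_mulVec_zero_iff,
    ← hB.dotProduct_mulVec_zero_iff, add_mulVec, dotProduct_add]
  exact add_eq_zero_iff_of_nonneg (hA.dotProduct_mulVec_nonneg v) (hB.dotProduct_mulVec_nonneg v)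

lemma add_mul_eq_left_of_isIdempotentElem (hA : A.PosSemidef) (hB : B.PosSemidef)
    (h : IsIdempotentElem (A + B)) : (A + B) * A = A := by
  classical
  have hright : A * (A + B) = A := by
    refine ext_of_mulVec_single fun j ↦ ?_
    have hker : (A + B) *ᵥ ((A + B) *ᵥ Pi.single j 1 - Pi.single j 1) = 0 := by
      rw [mulVec_sub, mulVec_mulVec, h.eq, sub_self]
    have := ((add_mulVec_eq_zero_iff_of_posSemidef hA hB _).mp hker).1
    rwa [mulVec_sub, mulVec_mulVec, sub_eq_zero] at this
  simpa [hA.1.eq, hB.1.eq] using congr(($hright)ᴴ)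

lemma mulVec_eq_zero_or_eq_self_of_add_mulVec_eq_smul (hA : A.PosSemidef) (hE : E.PosSemidef)
    (hEE : IsIdempotentElem E) (hEA : E * A = A) {v : n → 𝕜} {c : 𝕜}
    (hv : (A + E) *ᵥ v = c • v) : E *ᵥ v = 0 ∨ E *ᵥ v = v := by
  rcases eq_or_ne c 0 with rfl | hc
  · rw [zero_smul, add_mulVec_eq_zero_iff_of_posSemidef hA hE] at hv
    exact .inl hv.2
  · right
    apply smul_right_injective _ hc
    calc c • E *ᵥ v = (E * (A + E)) *ᵥ v := by rw [← mulVec_mulVec, hv, mulVec_smul]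
      _ = c • v := by rw [mul_add, hEA, hEE.eq, hv]

lemma exists_ne_zero_star_mul_ite_mul_eq {y : 𝕜} (hy : 0 ≤ y) :
    ∃ s : 𝕜, s ≠ 0 ∧ y = star s * (if y ≠ 0 then 1 else 0) * s := by
  rcases eq_or_ne y 0 with rfl | hne
  · exact ⟨1, one_ne_zero, by simp⟩
  · obtain ⟨r, hr, rfl⟩ := RCLike.nonneg_iff_exists_ofReal.mp hy
    refine ⟨(√r : ℝ), ?_, ?_⟩
    · simpa [Real.sqrt_eq_zero hr] using hne
    · simp [hne, ← RCLike.ofReal_mul, Real.mul_self_sqrt hr]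

variable [DecidableEq n]

lemma exists_simulCongruent_diagonal_ite (x : n → 𝕜) {y : n → 𝕜} (hy : 0 ≤ y) :
    ∃ x' : n → 𝕜, SimulCongruent (diagonal x) (diagonal y)
      (diagonal x') (diagonal fun i ↦ if y i ≠ 0 then 1 else 0) := by
  choose s hs hys using fun i ↦ exists_ne_zero_star_mul_ite_mul_eq (hy i)
  have hunit : IsUnit (diagonal s) := by
    simpa [isUnit_diagonal, Pi.isUnit_iff] using hs
  refine ⟨fun i ↦ (star (s i))⁻¹ * x i * (s i)⁻¹, diagonal s, hunit, ?_, ?_⟩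
  · simp [diagonal_conjTranspose, mul_assoc, hs]
  · simpa [diagonal_conjTranspose] using hys

lemma exists_isUnit_isIdempotentElem_of_posSemidef (hA : A.PosSemidef) :
    ∃ v E : Matrix n n 𝕜, IsUnit v ∧ IsIdempotentElem E ∧ A = vᴴ * E * v := by
  let U := hA.1.eigenvectorUnitary
  let l : n → 𝕜 := RCLike.ofReal ∘ hA.1.eigenvalues
  have hl : 0 ≤ l := fun i ↦ RCLike.ofReal_nonneg.mpr (hA.eigenvalues_nonneg i)
  have hAU : A * U = U * diagonal l := by
    conv_lhs => rw [hA.1.spectral_theorem, Unitary.conjStarAlgAut_apply]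
    rw [Matrix.mul_assoc, Unitary.coe_star_mul_self, Matrix.mul_one]
  obtain ⟨_, hscale⟩ := exists_simulCongruent_diagonal_ite l hl
  obtain ⟨v, hv, -, hAv⟩ := (simulCongruent_of_mul_unitary_eq U.2 hAU hAU).trans hscale
  exact ⟨v, _, hv, by simp [IsIdempotentElem], hAv⟩

lemma exists_simulCongruent_isIdempotentElem_add (hA : A.PosSemidef) (hB : B.PosSemidef) :
    ∃ A' B' : Matrix n n 𝕜, A'.PosSemidef ∧ B'.PosSemidef ∧ IsIdempotentElem (A' + B') ∧
      SimulCongruent A B A' B' := by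
  obtain ⟨v, E, hv, hE, hAB⟩ := exists_isUnit_isIdempotentElem_of_posSemidef (hA.add hB)
  obtain ⟨A', rfl⟩ := exists_eq_conjTranspose_mul_mul hv A
  obtain ⟨B', rfl⟩ := exists_eq_conjTranspose_mul_mul hv B
  have hsum : A' + B' = E := by
    rw [← add_mul, ← mul_add] at hAB
    exact hv.star.mul_left_cancel (hv.mul_right_cancel hAB)
  have hcongr : SimulCongruent (vᴴ * A' * v) (vᴴ * B' * v) A' B' := ⟨v, hv, rfl, rfl⟩
  exact ⟨A', B', hcongr.posSemidef_iff.mp hA, hcongr.swap.posSemidef_iff.mp hB, hsum ▸ hE, hcongr⟩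

lemma exists_simulCongruent_diagonal_of_isIdempotentElem_add (hA : A.PosSemidef)
    (hB : B.PosSemidef) (h : IsIdempotentElem (A + B)) :
    ∃ x y : n → 𝕜, SimulCongruent A B (diagonal x) (diagonal y) := by
  have hM : (A + (A + B)).IsHermitian := (hA.add (hA.add hB)).1
  let U : Matrix n n 𝕜 := hM.eigenvectorUnitary
  have eigenM (j : n) : (A + (A + B)) *ᵥ U.col j = (hM.eigenvalues j : 𝕜) • U.col j := by
    simpa [U] using! hM.mulVec_eigenvectorBasis j
  have eigenE (j : n) : ∃ c : 𝕜, (A + B) *ᵥ U.col j = c • U.col j := by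
    rcases mulVec_eq_zero_or_eq_self_of_add_mulVec_eq_smul hA (hA.add hB) h
      (add_mul_eq_left_of_isIdempotentElem hA hB h) (eigenM j) with h0 | h1
    · exact ⟨0, by rw [h0, zero_smul]⟩
    · exact ⟨1, by rw [h1, one_smul]⟩
  obtain ⟨m, hm⟩ := exists_mul_eq_mul_diagonal fun j ↦ ⟨_, eigenM j⟩
  obtain ⟨e, he⟩ := exists_mul_eq_mul_diagonal eigenE
  have eigenA : A * U = U * diagonal (fun i ↦ m i - e i) := by
    rw [← diagonal_sub, mul_sub, ← hm, ← he, ← sub_mul, add_sub_cancel_right]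
  have eigenB : B * U = U * diagonal (fun i ↦ e i - (m i - e i)) := by
    rw [← diagonal_sub, mul_sub, ← eigenA, ← he, ← sub_mul, add_sub_cancel_left]
  exact ⟨_, _, simulCongruent_of_mul_unitary_eq hM.eigenvectorUnitary.2 eigenA eigenB⟩

lemma exists_simulCongruent_diagonal (hA : A.PosSemidef) (hB : B.PosSemidef) :
    ∃ x y : n → 𝕜, SimulCongruent A B (diagonal x) (diagonal y) := by
  obtain ⟨A', B', hA', hB', hidem, hcongr⟩ := exists_simulCongruent_isIdempotentElem_add hA hB
  obtain ⟨x, y, hdiag⟩ := exists_simulCongruent_diagonal_of_isIdempotentElem_add hA' hB' hidem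
  exact ⟨x, y, hcongr.trans hdiag⟩

theorem stmt_3_general (hA : A.PosSemidef) (hB : B.PosSemidef) (p : n → Prop) [DecidablePred p]
    (hp : Fintype.card {i // p i} = B.rank) :
    ∃ x : n → 𝕜, 0 ≤ x ∧
      SimulCongruent A B (diagonal x) (diagonal fun i ↦ if p i then 1 else 0) := by
  obtain ⟨x, y, hxy⟩ := exists_simulCongruent_diagonal hA hB
  have hy : 0 ≤ y := posSemidef_diagonal_iff.mp (hxy.swap.posSemidef_iff.mp hB)
  obtain ⟨σ, hσ⟩ : ∃ σ : Equiv.Perm n, ∀ i, y (σ i) ≠ 0 ↔ p i :=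
    exists_perm_comp_iff (q := fun i ↦ y i ≠ 0) <| by rw [hp, hxy.swap.rank_eq, rank_diagonal]
  obtain ⟨x', hx'⟩ := exists_simulCongruent_diagonal_ite (x ∘ σ) (y := y ∘ σ) fun i ↦ hy (σ i)
  have h := hxy.trans ((simulCongruent_comp_perm x y σ).trans hx')
  simp only [Function.comp_apply, hσ] at h
  exact ⟨x', posSemidef_diagonal_iff.mp (h.posSemidef_iff.mp hA), h⟩

end RCLike

/-- For `ᾱ` symmetric positive semidefinite and `a` an arbitrary real `d×d`
matrix with `n = rank(aᵀa)`, there exist a diagonal matrix `δ` with nonnegative entries and an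
invertible `u` with `ᾱ = uᵀ δ u` and `aᵀ a = uᵀ I_d^n u`. -/
theorem stmt_3 (d : ℕ) (α a : Matrix (Fin d) (Fin d) ℝ) (hα : α.PosSemidef)
    (n : ℕ) (hn : (aᵀ * a).rank = n) :
    ∃ (dvec : Fin d → ℝ) (u : Matrix (Fin d) (Fin d) ℝ),
      (∀ i, 0 ≤ dvec i) ∧ IsUnit u ∧
      α = uᵀ * Matrix.diagonal dvec * u ∧
      aᵀ * a = uᵀ * (Matrix.of fun i j : Fin d => if i = j ∧ (i : ℕ) < n then (1 : ℝ) else 0) * u := by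
  have hle : n ≤ d := hn ▸ rank_le_width _
  obtain ⟨x, hx, u, hu, hαu, hau⟩ := stmt_3_general hα (posSemidef_conjTranspose_mul_self a)
    (fun i : Fin d ↦ (i : ℕ) < n) ((Fintype.card_fin_lt_of_le hle).trans hn.symm)
  exact ⟨x, u, hx, hu, hαu, by
    simpa only [diagonal, ite_and, conjTranspose_eq_transpose_of_trivial] using hau⟩
end

section
/- Fix d ≥ 2 and α ∈ ℝ. For a smooth function f : ℝ^S → ℝ, where S = {{i,j} : 1 ≤ i ≤ j ≤ d} indexes the coordinates x_{{i,j}} of a symmetric d×d matrix (with the convention x_{{i,j}} = x_{{j,i}}), and for i ∈ {1,…,d}, define the second-order differential operator L_i by L_i f(x) = α ∂_{{i,i}} f(x) + 2 x_{{i,i}} ∂²_{{i,i}} f(x) + 2 Σ_{m≠i} x_{{i,m}} ∂_{{i,m}} ∂_{{i,i}} f(x) + (1/2) Σ_{m≠i, l≠i} x_{{m,l}} ∂_{{i,m}} ∂_{{i,l}} f(x), where ∂_{{i,j}} denotes partial differentiation with respect to the coordinate x_{{i,j}}. Then the operators commute: for every C^∞ function f : ℝ^S → ℝ and all i, j ∈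 {1,…,d}, L_i (L_j f) = L_j (L_i f). -/
open Sym2

/-- Partial derivative of `f : ℝ^S → ℝ` with respect to the coordinate indexed by
`s ∈ S = Sym2 (Fin d)` (the unordered pairs `{i,j}` indexing the entries of a symmetric
matrix). -/
noncomputable def pderiv {d : ℕ} (s : Sym2 (Fin d))
    (f : (Sym2 (Fin d) → ℝ) → ℝ) (x : Sym2 (Fin d) → ℝ) : ℝ :=
  fderiv ℝ f x (Pi.single s 1)

/-- The operator
`L_i f(x) = α ∂_{{i,i}} f + 2 x_{{i,i}} ∂²_{{i,i}} f + 2 Σ_{m≠i} x_{{i,m}} ∂_{{i,m}}∂_{{i,i}} f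
  + (1/2) Σ_{m≠i, l≠i} x_{{m,l}} ∂_{{i,m}}∂_{{i,l}} f`. -/
noncomputable def Lop {d : ℕ} (α : ℝ) (i : Fin d)
    (f : (Sym2 (Fin d) → ℝ) → ℝ) : (Sym2 (Fin d) → ℝ) → ℝ :=
  fun x =>
    α * pderiv s(i, i) f x
    + 2 * x s(i, i) * pderiv s(i, i) (pderiv s(i, i) f) x
    + 2 * ∑ m ∈ Finset.univ.filter (fun m => m ≠ i),
        x s(i, m) * pderiv s(i, m) (pderiv s(i, i) f) x
    + (1 / 2) * ∑ m ∈ Finset.univ.filter (fun m => m ≠ i),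
        ∑ l ∈ Finset.univ.filter (fun l => l ≠ i),
          x s(m, l) * pderiv s(i, m) (pderiv s(i, l) f) x

/-! Write `D_ab = (1 + δ_ab) ∂_{a,b}`. Then `[D_ab, x_pq] = δ_ap δ_bq + δ_aq δ_bp` holds without
exception on the diagonal, and `2 L_i = α D_ii + Q_i` with `Q_i = Σ_{m,l} x_ml D_im D_il` summed
over all indices. Hence `[D_ab, Q_j] = 2 D_ja D_jb`, so the terms `2 α D_ij²` in
`[α D_ii, Q_j] - [α D_jj, Q_i]` cancel, and `[Q_i, Q_j]` is the difference of
`Σ x_ml [D_im D_il, Q_j] = 4 D_ij Σ x_ml D_im D_jl` and of the same expression with `i` and `j`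
exchanged, which is equal to it. Only the canonical commutation relations are used, so all of this
takes place in an arbitrary algebra. -/

attribute [local instance] LieRing.ofAssociativeRing

section Commutator

variable {R : Type*} [Ring R]

lemma lie_mul_eq_lie_mul_add_mul_lie (a b c : R) : ⁅a, b * c⁆ = ⁅a, b⁆ * c + b * ⁅a, c⁆ := by
  simp only [Ring.lie_def]
  noncomm_ring

lemma mul_lie_eq_mul_lie_add_lie_mul (a b c : R) : ⁅a * b, c⁆ = a * ⁅b, c⁆ + ⁅a, c⁆ * b := by
  simp only [Ring.lie_def]
  noncomm_ring

lemma lie_mul_mul_of_commute {x y P S : R} (hxy : Commute x y) (hPS : Commute P S) :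
    ⁅x * P, y * S⁆ = x * ⁅P, y * S⁆ - y * ⁅S, x * P⁆ := by
  have hcross : x * y * (S * P) = y * x * (P * S) := by rw [hxy.eq, hPS.eq]
  calc ⁅x * P, y * S⁆
      = x * ⁅P, y * S⁆ - y * ⁅S, x * P⁆ + (x * y * (S * P) - y * x * (P * S)) := by
        simp only [Ring.lie_def]
        noncomm_ring
    _ = x * ⁅P, y * S⁆ - y * ⁅S, x * P⁆ := by rw [hcross, sub_self, add_zero]

lemma lie_sum_mul_sum_mul_of_commute {κ : Type*} [Fintype κ] {x P S : κ → R}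
    (hx : ∀ k n, Commute (x k) (x n)) (hPS : ∀ k n, Commute (P k) (S n)) :
    ⁅∑ k, x k * P k, ∑ n, x n * S n⁆ =
      ∑ k, x k * ⁅P k, ∑ n, x n * S n⁆ - ∑ n, x n * ⁅S n, ∑ k, x k * P k⁆ := by
  simp only [sum_lie, lie_sum, lie_mul_mul_of_commute (hx _ _) (hPS _ _), Finset.mul_sum,
    Finset.sum_sub_distrib]
  rw [Finset.sum_comm (f := fun n k => x k * ⁅P k, x n * S n⁆)]

lemma lie_derivation_mulLeft {k A : Type*} [CommRing k] [CommRing A] [Algebra k A]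
    (D : Derivation k A A) (a : A) :
    ⁅(D : Module.End k A), LinearMap.mulLeft k a⁆ = LinearMap.mulLeft k (D a) := by
  ext b
  simp [Ring.lie_def, mul_comm b]

end Commutator

section WeightedSum

variable {ι M : Type*} [Fintype ι] [DecidableEq ι] [AddCommMonoid M]

lemma sum_ite_eq_two_nsmul (i : ι) (g : ι → M) :
    ∑ m, (if i = m then 2 else 1) • g m = 2 • g i + ∑ m with m ≠ i, g m := by
  rw [Finset.filter_ne', ← Finset.add_sum_erase _ _ (Finset.mem_univ i), if_pos rfl]
  congr 1
  refine Finset.sum_congr rfl fun m hm => ?_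
  rw [if_neg (Finset.ne_of_mem_erase hm).symm, one_smul]

lemma sum_sum_ite_eq_two_nsmul_of_symm (i : ι) {g : ι → ι → M} (hg : ∀ m l, g m l = g l m) :
    ∑ m, ∑ l, (if i = m then 2 else 1) • (if i = l then 2 else 1) • g m l =
      4 • g i i + 4 • ∑ m with m ≠ i, g i m + ∑ m with m ≠ i, ∑ l with l ≠ i, g m l := by
  simp only [← Finset.smul_sum, sum_ite_eq_two_nsmul, Finset.sum_add_distrib, hg _ i]
  abel

end WeightedSum

/-- The canonical commutation relations for position operators `x s` and momentum operators `p s`: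
positions commute, momenta commute, and `[p s, x t] = δ_st`. -/
structure IsCanonicalPair {σ A : Type*} [DecidableEq σ] [Ring A] (x p : σ → A) : Prop where
  commute_position (s t : σ) : Commute (x s) (x t)
  commute_momentum (s t : σ) : Commute (p s) (p t)
  lie_momentum_position (s t : σ) : ⁅p s, x t⁆ = if s = t then 1 else 0

section SymmetricMatrix

variable {ι A : Type*} [DecidableEq ι] [Ring A]

/-- The derivative `D_ab = (1 + δ_ab) ∂_{a,b}` along the symmetric matrix `E_ab + E_ba`, where `p s`
stands for `∂_s`. -/
def symmDeriv (p : Sym2 ι → A) (a b : ι) : A :=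
  (if a = b then 2 else 1) • p s(a, b)

lemma symmDeriv_comm (p : Sym2 ι → A) (a b : ι) : symmDeriv p a b = symmDeriv p b a := by
  simp only [symmDeriv, Sym2.eq_swap (a := a), eq_comm (a := a)]

namespace IsCanonicalPair

variable {x p : Sym2 ι → A}

lemma commute_symmDeriv (h : IsCanonicalPair x p) (a b m l : ι) :
    Commute (symmDeriv p a b) (symmDeriv p m l) :=
  ((h.commute_momentum _ _).smul_left _).smul_right _

lemma commute_symmDeriv_mul (h : IsCanonicalPair x p) (a b m l k n : ι) :
    Commute (symmDeriv p a b) (symmDeriv p m l * symmDeriv p k n) :=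
  (h.commute_symmDeriv _ _ _ _).mul_right (h.commute_symmDeriv _ _ _ _)

-- The nested conditionals let a double sum over `m` and `l` collapse one index at a time.
lemma lie_symmDeriv_position (h : IsCanonicalPair x p) (a b m l : ι) :
    ⁅symmDeriv p a b, x s(m, l)⁆ =
      (if m = a then if l = b then 1 else 0 else 0) +
        (if m = b then if l = a then 1 else 0 else 0) := by
  rw [symmDeriv, nsmul_lie, h.lie_momentum_position]
  by_cases hab : a = b
  · subst hab
    have hpair : s(a, a) = s(m, l) ↔ m = a ∧ l = a := by
      rw [Sym2.eq_iff, and_comm (a := a = l), or_self, eq_comm, eq_comm (a := a)]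
    simp only [if_true, two_smul, hpair, ite_and]
  · simp only [if_neg hab, one_smul, Sym2.eq_iff]
    grind

end IsCanonicalPair

variable [Fintype ι]

/-- The part `Σ_{m,l} x_ml D_im D_il` of `2 L_i` that is quadratic in the derivatives. -/
def quadraticPart (x p : Sym2 ι → A) (i : ι) : A :=
  ∑ m, ∑ l, x s(m, l) * (symmDeriv p i m * symmDeriv p i l)

namespace IsCanonicalPair

variable {x p : Sym2 ι → A}

lemma lie_symmDeriv_quadraticPart (h : IsCanonicalPair x p) (a b j : ι) :
    ⁅symmDeriv p a b, quadraticPart x p j⁆ = 2 • (symmDeriv p j a * symmDeriv p j b) := by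
  have hterm (m l : ι) :
      ⁅symmDeriv p a b, x s(m, l) * (symmDeriv p j m * symmDeriv p j l)⁆ =
        ⁅symmDeriv p a b, x s(m, l)⁆ * (symmDeriv p j m * symmDeriv p j l) := by
    rw [lie_mul_eq_lie_mul_add_mul_lie, (h.commute_symmDeriv_mul a b j m j l).lie_eq, mul_zero,
      add_zero]
  simp only [quadraticPart, lie_sum, hterm, h.lie_symmDeriv_position, add_mul, ite_mul, one_mul,
    zero_mul, Finset.sum_add_distrib, Finset.sum_ite_irrel, Finset.sum_ite_eq',
    Finset.sum_const_zero, Finset.mem_univ, if_true]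
  rw [(h.commute_symmDeriv j b j a).eq, two_smul]

lemma lie_mul_symmDeriv_quadraticPart (h : IsCanonicalPair x p) (i j m l : ι) :
    ⁅symmDeriv p i m * symmDeriv p i l, quadraticPart x p j⁆ =
      2 • (symmDeriv p i j * (symmDeriv p i m * symmDeriv p j l)) +
        2 • (symmDeriv p i j * (symmDeriv p i l * symmDeriv p j m)) := by
  have hfirst : symmDeriv p i m * ⁅symmDeriv p i l, quadraticPart x p j⁆ =
      2 • (symmDeriv p i j * (symmDeriv p i m * symmDeriv p j l)) := by
    rw [h.lie_symmDeriv_quadraticPart, symmDeriv_comm p j i, mul_smul_comm,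
      (h.commute_symmDeriv i m i j).left_comm]
  have hsecond : ⁅symmDeriv p i m, quadraticPart x p j⁆ * symmDeriv p i l =
      2 • (symmDeriv p i j * (symmDeriv p i l * symmDeriv p j m)) := by
    rw [h.lie_symmDeriv_quadraticPart, symmDeriv_comm p j i, smul_mul_assoc, mul_assoc,
      (h.commute_symmDeriv j m i l).eq]
  rw [mul_lie_eq_mul_lie_add_lie_mul, hfirst, hsecond]

lemma sum_position_mul_lie_quadraticPart_symm (h : IsCanonicalPair x p) (i j : ι) :
    ∑ m, ∑ l, x s(m, l) * ⁅symmDeriv p i m * symmDeriv p i l, quadraticPart x p j⁆ =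
      ∑ m, ∑ l, x s(m, l) * ⁅symmDeriv p j m * symmDeriv p j l, quadraticPart x p i⁆ := by
  refine Finset.sum_congr rfl fun m _ => Finset.sum_congr rfl fun l _ => ?_
  rw [h.lie_mul_symmDeriv_quadraticPart, h.lie_mul_symmDeriv_quadraticPart, symmDeriv_comm p j i,
    (h.commute_symmDeriv j m i l).eq, (h.commute_symmDeriv j l i m).eq, add_comm]

lemma commute_quadraticPart (h : IsCanonicalPair x p) (i j : ι) :
    Commute (quadraticPart x p i) (quadraticPart x p j) := by
  have hexpand := lie_sum_mul_sum_mul_of_commute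
    (x := fun k : ι × ι => x s(k.1, k.2))
    (P := fun k => symmDeriv p i k.1 * symmDeriv p i k.2)
    (S := fun k => symmDeriv p j k.1 * symmDeriv p j k.2)
    (fun _ _ => h.commute_position _ _)
    (fun _ _ => .mul_left (h.commute_symmDeriv_mul _ _ _ _ _ _)
      (h.commute_symmDeriv_mul _ _ _ _ _ _))
  simp only [Fintype.sum_prod_type] at hexpand
  rw [commute_iff_lie_eq]
  exact hexpand.trans (sub_eq_zero.mpr (h.sum_position_mul_lie_quadraticPart_symm i j))

lemma commute_smul_symmDeriv_add_quadraticPart {K : Type*} [CommRing K] [Algebra K A]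
    (h : IsCanonicalPair x p) (α : K) (i j : ι) :
    Commute (α • symmDeriv p i i + quadraticPart x p i)
      (α • symmDeriv p j j + quadraticPart x p j) := by
  rw [commute_iff_lie_eq]
  have hDD : ⁅symmDeriv p i i, symmDeriv p j j⁆ = 0 :=
    (h.commute_symmDeriv i i j j).lie_eq
  have hQQ : ⁅quadraticPart x p i, quadraticPart x p j⁆ = 0 :=
    (h.commute_quadraticPart i j).lie_eq
  have hcross :
      ⁅quadraticPart x p i, symmDeriv p j j⁆ + ⁅symmDeriv p i i, quadraticPart x p j⁆ = 0 := by
    rw [← lie_skew (quadraticPart x p i), h.lie_symmDeriv_quadraticPart,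
      h.lie_symmDeriv_quadraticPart, symmDeriv_comm p j i, neg_add_cancel]
  simp only [lie_add, add_lie, LieAlgebra.lie_smul, smul_lie, hDD, hQQ, smul_zero, zero_add,
    add_zero]
  rw [← smul_add, hcross, smul_zero]

end IsCanonicalPair

variable {K : Type*} [Field K] [Algebra K A]

/-- The operator `L_i` in an algebra whose elements `x s` and `p s` play the roles of the coordinate
`x_s` and the derivative `∂_s`; it is `Lop` when they are these operators on smooth functions. -/
def rowOperator (x p : Sym2 ι → A) (α : K) (i : ι) : A :=
  α • p s(i, i) + (2 : K) • (x s(i, i) * (p s(i, i) * p s(i, i))) +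
    (2 : K) • ∑ m with m ≠ i, x s(i, m) * (p s(i, m) * p s(i, i)) +
    (1 / 2 : K) • ∑ m with m ≠ i, ∑ l with l ≠ i, x s(m, l) * (p s(i, m) * p s(i, l))

namespace IsCanonicalPair

variable {x p : Sym2 ι → A}

lemma quadraticPart_eq (h : IsCanonicalPair x p) (i : ι) :
    quadraticPart x p i =
      4 • (x s(i, i) * (p s(i, i) * p s(i, i))) +
        4 • ∑ m with m ≠ i, x s(i, m) * (p s(i, m) * p s(i, i)) +
        ∑ m with m ≠ i, ∑ l with l ≠ i, x s(m, l) * (p s(i, m) * p s(i, l)) := by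
  have hsymm (m l : ι) :
      x s(m, l) * (p s(i, m) * p s(i, l)) = x s(l, m) * (p s(i, l) * p s(i, m)) := by
    rw [Sym2.eq_swap, (h.commute_momentum _ _).eq]
  simp only [quadraticPart, symmDeriv, smul_mul_assoc, mul_smul_comm,
    (h.commute_momentum s(i, _) s(i, i)).eq]
  simp only [smul_comm (if i = _ then 2 else 1) (if i = _ then 2 else 1)]
  exact sum_sum_ite_eq_two_nsmul_of_symm i hsymm

variable [NeZero (2 : K)]

lemma rowOperator_eq (h : IsCanonicalPair x p) (α : K) (i : ι) :
    rowOperator x p α i = (1 / 2 : K) • (α • symmDeriv p i i + quadraticPart x p i) := by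
  have htwo : (2 : K) ≠ 0 := two_ne_zero
  rw [h.quadraticPart_eq, symmDeriv, if_pos rfl, rowOperator]
  simp only [← Nat.cast_smul_eq_nsmul K]
  match_scalars <;> field_simp <;> norm_num

theorem commute_rowOperator (h : IsCanonicalPair x p) (α : K) (i j : ι) :
    Commute (rowOperator x p α i) (rowOperator x p α j) := by
  rw [h.rowOperator_eq, h.rowOperator_eq]
  exact ((h.commute_smul_symmDeriv_add_quadraticPart α i j).smul_left _).smul_right _

end IsCanonicalPair

end SymmetricMatrix

section SmoothFunctions

open scoped ContDiff

variable {𝕜 E : Type*} [RCLike 𝕜] [NormedAddCommGroup E] [NormedSpace 𝕜 E]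

variable (𝕜 E) in
/-- The algebra of smooth scalar functions on a normed space, on which the differential operators
are endomorphisms. -/
def smoothFunctions : Subalgebra 𝕜 (E → 𝕜) where
  carrier := {f | ContDiff 𝕜 ∞ f}
  mul_mem' {f g} (hf : ContDiff 𝕜 ∞ f) (hg : ContDiff 𝕜 ∞ g) := hf.mul hg
  add_mem' {f g} (hf : ContDiff 𝕜 ∞ f) (hg : ContDiff 𝕜 ∞ g) := hf.add hg
  algebraMap_mem' c := (contDiff_const : ContDiff 𝕜 ∞ fun _ : E => c)

lemma mem_smoothFunctions {f : E → 𝕜} : f ∈ smoothFunctions 𝕜 E ↔ ContDiff 𝕜 ∞ f := Iff.rfl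

namespace smoothFunctions

lemma contDiff (f : smoothFunctions 𝕜 E) : ContDiff 𝕜 ∞ (f : E → 𝕜) := f.2

lemma differentiable (f : smoothFunctions 𝕜 E) : Differentiable 𝕜 (f : E → 𝕜) :=
  (contDiff f).differentiable (by simp)

lemma contDiff_fderiv (f : smoothFunctions 𝕜 E) :
    ContDiff 𝕜 ∞ (fderiv 𝕜 (f : E → 𝕜)) :=
  (contDiff f).fderiv_right (by simp)

variable (𝕜) in
/-- The directional derivative along `v`, as a derivation of the algebra of smooth functions. -/
noncomputable def dirDeriv (v : E) :
    Derivation 𝕜 (smoothFunctions 𝕜 E) (smoothFunctions 𝕜 E) :=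
  Derivation.mk'
    { toFun f := ⟨fun x => fderiv 𝕜 (f : E → 𝕜) x v, (contDiff_fderiv f).clm_apply contDiff_const⟩
      map_add' f g := by
        ext x
        simp [fderiv_add (differentiable f x) (differentiable g x)]
      map_smul' c f := by
        ext x
        simp [fderiv_const_smul (differentiable f x)] }
    fun f g => by
      ext x
      simp [fderiv_mul (differentiable f x) (differentiable g x)]

lemma dirDeriv_dirDeriv_apply (v w : E) (f : smoothFunctions 𝕜 E) (x : E) :
    (dirDeriv 𝕜 v (dirDeriv 𝕜 w f) : E → 𝕜) x = fderiv 𝕜 (fderiv 𝕜 (f : E → 𝕜)) x v w := by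
  have hf : DifferentiableAt 𝕜 (fderiv 𝕜 (f : E → 𝕜)) x :=
    (contDiff_fderiv f).differentiable (by simp) x
  change fderiv 𝕜 (fun y => fderiv 𝕜 (f : E → 𝕜) y w) x v = _
  simp [fderiv_clm_apply hf (differentiableAt_const w)]

lemma dirDeriv_dirDeriv_comm (v w : E) (f : smoothFunctions 𝕜 E) :
    dirDeriv 𝕜 v (dirDeriv 𝕜 w f) = dirDeriv 𝕜 w (dirDeriv 𝕜 v f) := by
  ext x
  have hsymm : IsSymmSndFDerivAt 𝕜 (f : E → 𝕜) x := by
    refine (contDiff f).contDiffAt.isSymmSndFDerivAt ?_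
    rw [minSmoothness_of_isRCLikeNormedField]
    exact WithTop.coe_le_coe.mpr le_top
  rw [dirDeriv_dirDeriv_apply, dirDeriv_dirDeriv_apply, hsymm.eq]

end smoothFunctions

end SmoothFunctions

section Coordinates

variable {𝕜 σ : Type*} [RCLike 𝕜] [Fintype σ]

variable (𝕜) in
/-- The coordinate function `x ↦ x s`. -/
def coord (s : σ) : smoothFunctions 𝕜 (σ → 𝕜) :=
  ⟨fun x => x s, mem_smoothFunctions.mpr (contDiff_apply 𝕜 𝕜 s)⟩

variable (𝕜) in
/-- Multiplication by the coordinate `s`, as an operator on smooth functions. -/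
def coordMul (s : σ) : Module.End 𝕜 (smoothFunctions 𝕜 (σ → 𝕜)) :=
  LinearMap.mulLeft 𝕜 (coord 𝕜 s)

variable [DecidableEq σ]

variable (𝕜) in
/-- The partial derivative along the coordinate `s`, as an operator on smooth functions. -/
noncomputable def coordDeriv (s : σ) : Module.End 𝕜 (smoothFunctions 𝕜 (σ → 𝕜)) :=
  smoothFunctions.dirDeriv 𝕜 (Pi.single s 1 : σ → 𝕜)

lemma coordDeriv_coord (s t : σ) : coordDeriv 𝕜 s (coord 𝕜 t) = if s = t then 1 else 0 := by
  ext x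
  change fderiv 𝕜 (fun y : σ → 𝕜 => y t) x (Pi.single s 1) = _
  rw [fderiv_apply differentiableAt_fun_id]
  split_ifs with hst <;> simp [hst, eq_comm]

variable (𝕜 σ) in
theorem isCanonicalPair_coordMul_coordDeriv :
    IsCanonicalPair (coordMul 𝕜 : σ → _) (coordDeriv 𝕜) where
  commute_position s t := LinearMap.ext fun f => mul_left_comm (coord 𝕜 s) (coord 𝕜 t) f
  commute_momentum s t := LinearMap.ext fun f =>
    smoothFunctions.dirDeriv_dirDeriv_comm (Pi.single s 1 : σ → 𝕜) (Pi.single t 1) f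
  lie_momentum_position s t := by
    have hlie :
        ⁅coordDeriv 𝕜 s, coordMul 𝕜 t⁆ = LinearMap.mulLeft 𝕜 (coordDeriv 𝕜 s (coord 𝕜 t)) :=
      lie_derivation_mulLeft _ _
    rw [hlie, coordDeriv_coord]
    split_ifs
    · exact LinearMap.mulLeft_one _ _
    · exact LinearMap.mulLeft_zero_eq_zero _ _

end Coordinates

section PartialDerivatives

variable {d : ℕ} (s : Sym2 (Fin d)) (f : smoothFunctions ℝ (Sym2 (Fin d) → ℝ))

lemma coe_coordMul : (coordMul ℝ s f : (Sym2 (Fin d) → ℝ) → ℝ) = fun x => x s * f.1 x := rfl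

lemma coe_coordDeriv : (coordDeriv ℝ s f : (Sym2 (Fin d) → ℝ) → ℝ) = pderiv s f := rfl

lemma Lop_eq_coe_rowOperator (α : ℝ) (i : Fin d) :
    Lop α i f = rowOperator (coordMul ℝ) (coordDeriv ℝ) α i f := by
  ext x
  simp [Lop, rowOperator, coe_coordMul, coe_coordDeriv, mul_assoc]

end PartialDerivatives

/-- For `d ≥ 2` and any `C^∞` function `f`, the operators `L_i` commute:
`L_i (L_j f) = L_j (L_i f)`. -/
theorem stmt_4 (d : ℕ) (hd : 2 ≤ d) (α : ℝ)
    (f : (Sym2 (Fin d) → ℝ) → ℝ) (hf : ContDiff ℝ (⊤ : ℕ∞) f) (i j : Fin d) :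
    Lop α i (Lop α j f) = Lop α j (Lop α i f) := by
  lift f to smoothFunctions ℝ (Sym2 (Fin d) → ℝ) using hf
  have hcommute := (isCanonicalPair_coordMul_coordDeriv ℝ (Sym2 (Fin d))).commute_rowOperator α i j
  simp only [Lop_eq_coe_rowOperator]
  exact congrArg Subtype.val (LinearMap.congr_fun hcommute.eq f)
end

section
/- Let a, b be real d×d matrices and set q_s := ∫₀ˢ exp(ub) aᵀa exp(ubᵀ) du for s ≥ 0. Let v be a real symmetric d×d matrix and t₀ > 0 be such that I_d − 2 q_s v is invertible for all s ∈ [0, t₀]. Then the matrix-valued function ψ(t) := exp(tbᵀ) (I_d − 2 v q_t)⁻¹ v exp(tb), defined for t ∈ [0, t₀], satisfies ψ(0) = v and, at every t ∈ [0, t₀], ψ is differentiable with derivative ψ'(t) = ψ(t) b + bᵀ ψ(t) + 2 ψ(t) aᵀa ψ(t) (matrix Riccati equation). -/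
open Matrix MeasureTheory

attribute [local instance] Matrix.normedAddCommGroup Matrix.normedSpace

/-- The matrix `q_s := ∫₀ˢ exp(ub) aᵀa exp(ubᵀ) du` (Bochner integral, computed entrywise). -/
noncomputable def qMat {d : ℕ} (a b : Matrix (Fin d) (Fin d) ℝ) (s : ℝ) :
    Matrix (Fin d) (Fin d) ℝ :=
  Matrix.of fun i j =>
    ∫ u in (0:ℝ)..s,
      (NormedSpace.exp (u • b) * (aᵀ * a) * NormedSpace.exp (u • bᵀ)) i j

/-!
Write `M = (1 - 2 v q)⁻¹ v`. Since `(r⁻¹)' = -r⁻¹ r' r⁻¹`, it satisfies `M' = M (2 q') M`, the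
purely quadratic part of the Riccati equation. As `q' = exp(tb) c exp(tb')`, conjugating to
`ψ = exp(tb') M exp(tb)` turns `2 M q' M` into `2 ψ c ψ`, and differentiating the two exponentials
produces the linear terms `b' ψ + ψ b`.
-/

theorem isUnit_one_sub_mul_comm {R : Type*} [Ring R] (x y : R) :
    IsUnit (1 - x * y) ↔ IsUnit (1 - y * x) := by
  simpa [spectrum.mem_iff, not_iff_not] using
    spectrum.unit_mem_mul_comm (a := x) (b := y) (r := (1 : ℤˣ))

theorem hasDerivWithinAt_inverse_one_sub_mul_mul {𝕜 R : Type*} [NontriviallyNormedField 𝕜]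
    [NormedRing R] [HasSummableGeomSeries R] [NormedAlgebra 𝕜 R] (v : R) {q : 𝕜 → R} {q' : R}
    {s : Set 𝕜} {t : 𝕜} (hq : HasDerivWithinAt q q' s t) (hunit : IsUnit (1 - v * q t)) :
    HasDerivWithinAt (fun τ => Ring.inverse (1 - v * q τ) * v)
      ((Ring.inverse (1 - v * q t) * v) * q' * (Ring.inverse (1 - v * q t) * v)) s t := by
  obtain ⟨r, hr⟩ := hunit
  have hinverse := hasFDerivAt_ringInverse (𝕜 := 𝕜) r
  rw [hr] at hinverse
  refine ((hinverse.comp_hasDerivWithinAt t ((hq.const_mul v).const_sub 1)).mul_const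
    v).congr_deriv ?_
  simp [← hr, mul_assoc]

section Riccati

open NormedSpace

variable {𝕂 A : Type*} [RCLike 𝕂] [NormedRing A] [NormedAlgebra 𝕂 A]

/-- The candidate solution `ψ(t) = exp(tb') (1 - 2 v q(t))⁻¹ v exp(tb)` of the Riccati equation
`ψ' = ψ b + b' ψ + 2 ψ c ψ`. The inverse is `Ring.inverse`, hence `0` where `1 - 2 v q(t)` is not
a unit. -/
noncomputable def riccatiSolution (b b' v : A) (q : 𝕂 → A) (t : 𝕂) : A :=
  exp (t • b') * Ring.inverse (1 - (2 : 𝕂) • (v * q t)) * v * exp (t • b)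

theorem riccatiSolution_zero (b b' v : A) {q : 𝕂 → A} (hq : q 0 = 0) :
    riccatiSolution b b' v q 0 = v := by
  simp [riccatiSolution, hq]

variable [CompleteSpace A]

theorem hasDerivWithinAt_exp_smul_mul_mul_exp_smul (b b' : A) {M : 𝕂 → A} {M' : A} {s : Set 𝕂}
    {t : 𝕂} (hM : HasDerivWithinAt M M' s t) :
    HasDerivWithinAt (fun τ => exp (τ • b') * M τ * exp (τ • b))
      (exp (t • b') * M t * exp (t • b) * b + b' * (exp (t • b') * M t * exp (t • b)) +
        exp (t • b') * M' * exp (t • b)) s t := by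
  have hleft := (hasDerivAt_exp_smul_const' b' t).hasDerivWithinAt (s := s)
  have hright := (hasDerivAt_exp_smul_const b t).hasDerivWithinAt (s := s)
  refine ((hleft.mul hM).mul hright).congr_deriv ?_
  simp only [Pi.mul_apply]
  noncomm_ring

theorem hasDerivWithinAt_riccatiSolution (b b' c v : A) {q : 𝕂 → A} {s : Set 𝕂} {t : 𝕂}
    (hq : HasDerivWithinAt q (exp (t • b) * c * exp (t • b')) s t)
    (hunit : IsUnit (1 - (2 : 𝕂) • (q t * v))) :
    HasDerivWithinAt (riccatiSolution b b' v q)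
      (riccatiSolution b b' v q t * b + b' * riccatiSolution b b' v q t +
        (2 : 𝕂) • (riccatiSolution b b' v q t * c * riccatiSolution b b' v q t)) s t := by
  have hunit' : IsUnit (1 - v * (2 : 𝕂) • q t) := by
    rwa [isUnit_one_sub_mul_comm, smul_mul_assoc]
  have hM := hasDerivWithinAt_inverse_one_sub_mul_mul v (hq.const_smul (2 : 𝕂)) hunit'
  have hψ : riccatiSolution b b' v q = fun τ =>
      exp (τ • b') * (Ring.inverse (1 - v * (2 : 𝕂) • q τ) * v) * exp (τ • b) := by
    ext τ
    simp only [riccatiSolution, mul_smul_comm, mul_assoc]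
  rw [hψ]
  refine (hasDerivWithinAt_exp_smul_mul_mul_exp_smul b b' hM).congr_deriv ?_
  simp only [Pi.smul_apply, mul_smul_comm, smul_mul_assoc, mul_assoc]

theorem stmt_5_general (b b' c v : A) {q : 𝕂 → A} {s : Set 𝕂} (hq₀ : q 0 = 0)
    (hq : ∀ t ∈ s, HasDerivWithinAt q (exp (t • b) * c * exp (t • b')) s t)
    (hunit : ∀ t ∈ s, IsUnit (1 - (2 : 𝕂) • (q t * v))) :
    riccatiSolution b b' v q 0 = v ∧
      ∀ t ∈ s, HasDerivWithinAt (riccatiSolution b b' v q)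
        (riccatiSolution b b' v q t * b + b' * riccatiSolution b b' v q t +
          (2 : 𝕂) • (riccatiSolution b b' v q t * c * riccatiSolution b b' v q t)) s t :=
  ⟨riccatiSolution_zero b b' v hq₀, fun t ht =>
    hasDerivWithinAt_riccatiSolution b b' c v (hq t ht) (hunit t ht)⟩

end Riccati

section Matrix

open NormedSpace

open scoped Matrix.Norms.Operator in
theorem continuous_matrix_exp {m 𝕂 : Type*} [Fintype m] [DecidableEq m] [RCLike 𝕂] :
    Continuous (exp : Matrix m m 𝕂 → Matrix m m 𝕂) := by
  let : NormedAlgebra ℚ (Matrix m m 𝕂) := .restrictScalars ℚ 𝕂 _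
  exact exp_continuous

variable {d : ℕ} (a b : Matrix (Fin d) (Fin d) ℝ)

theorem qMat_zero : qMat a b 0 = 0 := by
  ext i j
  simp [qMat]

theorem hasDerivAt_qMat (t : ℝ) :
    HasDerivAt (qMat a b) (exp (t • b) * (aᵀ * a) * exp (t • bᵀ)) t := by
  have hcont : Continuous fun u : ℝ => exp (u • b) * (aᵀ * a) * exp (u • bᵀ) := by
    have := continuous_matrix_exp (m := Fin d) (𝕂 := ℝ)
    fun_prop
  exact hasDerivAt_pi.2 fun i => hasDerivAt_pi.2 fun j =>
    ((hcont.matrix_elem i j).integral_hasStrictDerivAt 0 t).hasDerivAt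

end Matrix

/-- **matrix Riccati equation.**
If `I - 2 q_s v` is invertible for all `s ∈ [0,t₀]`, then
`ψ(t) := exp(tbᵀ)(I - 2 v q_t)⁻¹ v exp(tb)` satisfies `ψ(0) = v` and on `[0,t₀]`
`ψ'(t) = ψ(t) b + bᵀ ψ(t) + 2 ψ(t) aᵀa ψ(t)`. -/
theorem stmt_5 (d : ℕ) (a b v : Matrix (Fin d) (Fin d) ℝ) (hv : v.IsSymm)
    (t₀ : ℝ) (ht₀ : 0 < t₀)
    (hinv : ∀ s ∈ Set.Icc (0:ℝ) t₀, IsUnit (1 - (2:ℝ) • (qMat a b s * v))) :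
    let ψ : ℝ → Matrix (Fin d) (Fin d) ℝ := fun t =>
      NormedSpace.exp (t • bᵀ) * (1 - (2:ℝ) • (v * qMat a b t))⁻¹ * v *
        NormedSpace.exp (t • b)
    ψ 0 = v ∧
      ∀ t ∈ Set.Icc (0:ℝ) t₀,
        HasDerivWithinAt ψ
          (ψ t * b + bᵀ * ψ t + (2:ℝ) • (ψ t * (aᵀ * a) * ψ t))
          (Set.Icc (0:ℝ) t₀) t := by
  simp only [Matrix.nonsing_inv_eq_ringInverse]
  -- The entrywise norm is not submultiplicative; the operator norm induces the same topology,
  -- on which alone the derivative depends.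
  open scoped Matrix.Norms.Operator in
  exact stmt_5_general b bᵀ (aᵀ * a) v (qMat_zero a b)
    (fun t _ => (hasDerivAt_qMat a b t).hasDerivWithinAt) hinv
end

section
/- Let a, b be real d×d matrices. For every t ∈ ℝ, the exponential of the 2d×2d block matrix [[b, −2aᵀa], [0, −bᵀ]] scaled by t is given by exp(t·[[b, −2aᵀa], [0, −bᵀ]]) = [[exp(tb), −2 exp(tb) ∫₀ᵗ exp(−sb) aᵀa exp(−sbᵀ) ds], [0, exp(−tbᵀ)]]. -/
/-!
A matrix curve with `Y' = M * Y` and `Y 0 = 1` is `t ↦ exp (t • M)`, because `exp (-t • M) * Y t`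
has derivative zero. For `M = [[A, B], [0, D]]` the block curve with diagonal blocks `exp (t • A)`
and `exp (t • D)` satisfies this equation exactly when its upper right block `X` solves
`X' = A * X + B * exp (t • D)` with `X 0 = 0`; variation of constants provides this `X`.
-/

open Matrix MeasureTheory

section Derivative

variable {𝕜 E 𝔸 l m n o : Type*} [NontriviallyNormedField 𝕜] [NormedAddCommGroup E]
  [NormedSpace 𝕜 E] [NormedRing 𝔸] [NormedAlgebra 𝕜 𝔸] {t : 𝕜}

theorem hasDerivAt_matrix_iff [Finite n] {F : 𝕜 → Matrix m n E} {F' : Matrix m n E} :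
    HasDerivAt F F' t ↔ ∀ i j, HasDerivAt (fun s => F s i j) (F' i j) t := by
  have := Fintype.ofFinite n
  exact hasDerivAt_pi.trans (forall_congr' fun _ => hasDerivAt_pi)

theorem hasDerivAt_matrix_mul [Fintype m] [Finite n]
    {F : 𝕜 → Matrix l m 𝔸} {F' : Matrix l m 𝔸} {G : 𝕜 → Matrix m n 𝔸} {G' : Matrix m n 𝔸}
    (hF : HasDerivAt F F' t) (hG : HasDerivAt G G' t) :
    HasDerivAt (fun s => F s * G s) (F' * G t + F t * G') t := by
  rw [hasDerivAt_matrix_iff] at hF hG ⊢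
  intro i j
  simpa only [Matrix.add_apply, mul_apply, Finset.sum_add_distrib] using
    HasDerivAt.fun_sum fun k (_ : k ∈ Finset.univ) => (hF i k).fun_mul (hG k j)

theorem hasDerivAt_matrix_fromBlocks [Finite n] [Finite o]
    {A : 𝕜 → Matrix l n E} {B : 𝕜 → Matrix l o E} {C : 𝕜 → Matrix m n E} {D : 𝕜 → Matrix m o E}
    {A' : Matrix l n E} {B' : Matrix l o E} {C' : Matrix m n E} {D' : Matrix m o E}
    (hA : HasDerivAt A A' t) (hB : HasDerivAt B B' t)
    (hC : HasDerivAt C C' t) (hD : HasDerivAt D D' t) :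
    HasDerivAt (fun s => fromBlocks (A s) (B s) (C s) (D s)) (fromBlocks A' B' C' D') t := by
  rw [hasDerivAt_matrix_iff] at hA hB hC hD ⊢
  rintro (i | i) (j | j)
  exacts [hA i j, hB i j, hC i j, hD i j]

theorem hasDerivAt_matrix_integral [NormedSpace ℝ E] [CompleteSpace E] [Finite n]
    {F : ℝ → Matrix m n E} (hF : Continuous F) (a t : ℝ) :
    HasDerivAt (fun u => of fun i j => ∫ s in a..u, F s i j) (F t) t :=
  hasDerivAt_matrix_iff.2 fun i j =>
    ((hF.matrix_elem i j).integral_hasStrictDerivAt a t).hasDerivAt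

end Derivative

section Exponential

open NormedSpace (exp)

variable {𝕜 𝔸 m n : Type*} [RCLike 𝕜] [NormedRing 𝔸] [NormedAlgebra 𝕜 𝔸] [CompleteSpace 𝔸]
  [Fintype m] [DecidableEq m] [Finite n]

theorem hasDerivAt_matrix_exp_smul (A : Matrix m m 𝔸) (t : 𝕜) :
    HasDerivAt (fun s : 𝕜 => exp (s • A)) (A * exp (t • A)) t := by
  open scoped Matrix.Norms.Operator in
  -- Mathlib's completeness instance is for the product uniformity, which agrees with that of the
  -- operator norm only after unfolding.
  have : @CompleteSpace (Matrix m m 𝔸) PseudoMetricSpace.toUniformSpace :=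
    inferInstanceAs (CompleteSpace (m → m → 𝔸))
  exact hasDerivAt_exp_smul_const' A t

theorem hasDerivAt_matrix_exp_neg_smul (A : Matrix m m 𝔸) (t : 𝕜) :
    HasDerivAt (fun s : 𝕜 => exp ((-s) • A)) (-(exp ((-t) • A) * A)) t := by
  have hcomm : A * exp ((-t) • A) = exp ((-t) • A) * A :=
    ((Commute.refl A).smul_right (-t)).exp_right
  rw [← hcomm]
  simpa only [smul_neg, neg_smul, neg_mul] using hasDerivAt_matrix_exp_smul (-A) t

variable (𝕜) in
theorem continuous_matrix_exp_smul (A : Matrix m m 𝔸) :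
    Continuous fun s : 𝕜 => exp (s • A) :=
  continuous_matrix fun i j => continuous_iff_continuousAt.2 fun s =>
    (hasDerivAt_matrix_iff.1 (hasDerivAt_matrix_exp_smul A s) i j).continuousAt

theorem matrix_exp_smul_mul_exp_neg_smul (A : Matrix m m 𝔸) (t : 𝕜) :
    exp (t • A) * exp ((-t) • A) = 1 := by
  let : NormedAlgebra ℚ 𝔸 := NormedAlgebra.restrictScalars ℚ 𝕜 𝔸
  rw [neg_smul, ← exp_add_of_commute _ _ (Commute.refl (t • A)).neg_right, add_neg_cancel,
    NormedSpace.exp_zero]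

theorem eq_exp_smul_mul_of_hasDerivAt_mul {A : Matrix m m 𝔸} {Y : 𝕜 → Matrix m n 𝔸}
    (hY : ∀ t, HasDerivAt Y (A * Y t) t) (t : 𝕜) :
    Y t = exp (t • A) * Y 0 := by
  have hderiv (s : 𝕜) : HasDerivAt (fun s => exp ((-s) • A) * Y s) 0 s := by
    simpa only [Matrix.neg_mul, Matrix.mul_assoc, neg_add_cancel] using
      hasDerivAt_matrix_mul (hasDerivAt_matrix_exp_neg_smul A s) (hY s)
  have hconst : exp ((-t) • A) * Y t = Y 0 := by
    ext i j
    have hentry (s : 𝕜) := hasDerivAt_matrix_iff.1 (hderiv s) i j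
    simpa using is_const_of_deriv_eq_zero (fun s => (hentry s).differentiableAt)
      (fun s => (hentry s).deriv) t 0
  rw [← hconst, ← Matrix.mul_assoc, matrix_exp_smul_mul_exp_neg_smul, Matrix.one_mul]

end Exponential

section BlockTriangular

open NormedSpace (exp)

variable {𝔸 m n : Type*} [NormedRing 𝔸] [NormedAlgebra ℝ 𝔸]
  [Fintype m] [DecidableEq m] [Fintype n] [DecidableEq n]

/-- Duhamel's variation-of-constants formula for the solution of `X' = A * X + B * exp (t • D)`
with `X 0 = 0`. The integral is taken entrywise, so that no norm on matrices has to be chosen. -/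
noncomputable def duhamelIntegral (A : Matrix m m 𝔸) (B : Matrix m n 𝔸) (D : Matrix n n 𝔸)
    (t : ℝ) : Matrix m n 𝔸 :=
  exp (t • A) * of fun i j => ∫ s in (0 : ℝ)..t, (exp ((-s) • A) * B * exp (s • D)) i j

theorem duhamelIntegral_zero (A : Matrix m m 𝔸) (B : Matrix m n 𝔸) (D : Matrix n n 𝔸) :
    duhamelIntegral A B D 0 = 0 := by
  ext i j
  simp [duhamelIntegral, mul_apply]

theorem duhamelIntegral_smul (c : ℝ) (A : Matrix m m 𝔸) (B : Matrix m n 𝔸) (D : Matrix n n 𝔸)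
    (t : ℝ) : duhamelIntegral A (c • B) D t = c • duhamelIntegral A B D t := by
  rw [duhamelIntegral, duhamelIntegral, ← Matrix.mul_smul]
  congr 1
  ext i j
  simp

variable [CompleteSpace 𝔸]

theorem hasDerivAt_duhamelIntegral (A : Matrix m m 𝔸) (B : Matrix m n 𝔸) (D : Matrix n n 𝔸)
    (t : ℝ) :
    HasDerivAt (duhamelIntegral A B D) (A * duhamelIntegral A B D t + B * exp (t • D)) t := by
  have hcont : Continuous fun s : ℝ => exp ((-s) • A) * B * exp (s • D) :=
    (((continuous_matrix_exp_smul ℝ A).comp continuous_neg).matrix_mul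
      continuous_const).matrix_mul (continuous_matrix_exp_smul ℝ D)
  have hprod := hasDerivAt_matrix_mul (hasDerivAt_matrix_exp_smul A t)
    (hasDerivAt_matrix_integral hcont 0 t)
  have hcancel : exp (t • A) * (exp ((-t) • A) * B * exp (t • D)) = B * exp (t • D) := by
    rw [← Matrix.mul_assoc, ← Matrix.mul_assoc, matrix_exp_smul_mul_exp_neg_smul, Matrix.one_mul]
  rwa [Matrix.mul_assoc, hcancel] at hprod

theorem stmt_6_general (A : Matrix m m 𝔸) (B : Matrix m n 𝔸) (D : Matrix n n 𝔸) (t : ℝ) :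
    exp (t • fromBlocks A B 0 D) =
      fromBlocks (exp (t • A)) (duhamelIntegral A B D t) 0 (exp (t • D)) := by
  let Y (u : ℝ) : Matrix (m ⊕ n) (m ⊕ n) 𝔸 :=
    fromBlocks (exp (u • A)) (duhamelIntegral A B D u) 0 (exp (u • D))
  have hzero (u : ℝ) : HasDerivAt (fun _ : ℝ => (0 : Matrix n m 𝔸)) 0 u :=
    hasDerivAt_matrix_iff.2 fun _ _ => hasDerivAt_const u 0
  have hY (u : ℝ) : HasDerivAt Y (fromBlocks A B 0 D * Y u) u := by
    simpa [Y, fromBlocks_multiply] using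
      hasDerivAt_matrix_fromBlocks (hasDerivAt_matrix_exp_smul A u)
        (hasDerivAt_duhamelIntegral A B D u) (hzero u) (hasDerivAt_matrix_exp_smul D u)
  have hY0 : Y 0 = 1 := by simp [Y, duhamelIntegral_zero]
  calc exp (t • fromBlocks A B 0 D)
      = exp (t • fromBlocks A B 0 D) * Y 0 := by rw [hY0, Matrix.mul_one]
    _ = Y t := (eq_exp_smul_mul_of_hasDerivAt_mul hY t).symm

end BlockTriangular

/-- The exponential of the block matrix `t·[[b, −2aᵀa],[0, −bᵀ]]` is
`[[exp(tb), −2 exp(tb) ∫₀ᵗ exp(−sb) aᵀa exp(−sbᵀ) ds],[0, exp(−tbᵀ)]]`. -/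
theorem stmt_6 (d : ℕ) (a b : Matrix (Fin d) (Fin d) ℝ) (t : ℝ) :
    NormedSpace.exp
        (t • Matrix.fromBlocks b (-((2:ℝ) • (aᵀ * a))) 0 (-bᵀ)) =
      Matrix.fromBlocks
        (NormedSpace.exp (t • b))
        (-((2:ℝ) • (NormedSpace.exp (t • b) *
          Matrix.of fun i j =>
            ∫ s in (0:ℝ)..t,
              (NormedSpace.exp ((-s) • b) * (aᵀ * a) *
                NormedSpace.exp ((-s) • bᵀ)) i j)))
        0
        (NormedSpace.exp ((-t) • bᵀ)) := by
  rw [← neg_smul, stmt_6_general, duhamelIntegral_smul]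
  simp only [duhamelIntegral, neg_smul, smul_neg]
end

section
/- Let w, q, x be real symmetric positive semidefinite d×d matrices and let m be any real d×d matrix. Then: (i) I_d + 2 q w is invertible and det(I_d + 2 q w) = det(I_d + 2 √w q √w) ≥ 1; (ii) Tr(√w · (I_d + 2 √w q √w)⁻¹ · √w · m x mᵀ) ≥ 0; consequently, for every α ≥ 0, det(I_d + 2 q w)^{−α/2} · exp(−Tr(√w (I_d + 2 √w q √w)⁻¹ √w m x mᵀ)) ≤ 1. -/
open Matrix

open scoped ComplexOrder in
/-- The positive semidefinite square root of a positive semidefinite matrix -/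
noncomputable def Matrix.PosSemidef.sqrt {n 𝕜 : Type*} [Fintype n] [RCLike 𝕜] [DecidableEq n]
    {A : Matrix n n 𝕜} (hA : PosSemidef A) : Matrix n n 𝕜 :=
  hA.1.eigenvectorUnitary.1 * diagonal ((↑) ∘ Real.sqrt ∘ hA.1.eigenvalues) *
  (star hA.1.eigenvectorUnitary : Matrix n n 𝕜)

/-!
Let `w = r * rᴴ` be any factorization, possibly rectangular; for the theorem, `r = √w`.
Sylvester's identity `det (1 + A * B) = det (1 + B * A)` moves `r` and `rᴴ` to the two sides of `q`,
so everything reduces to the positive semidefinite matrix `p = rᴴ * q * r`. The determinant of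
`1 + p` is a product of factors `1 + λᵢ ≥ 1`, and `r * (1 + p)⁻¹ * rᴴ` is again positive
semidefinite, so that its trace against a positive semidefinite matrix is nonnegative.
-/

section Ring

variable {n k R : Type*} [Fintype n] [Fintype k] [DecidableEq n] [DecidableEq k] [CommRing R]

theorem det_one_add_mul_mul_comm (q : Matrix n n R) (r : Matrix n k R) (s : Matrix k n R) :
    (1 + q * (r * s)).det = (1 + s * q * r).det := by
  rw [← Matrix.mul_assoc, det_one_add_mul_comm, Matrix.mul_assoc]

end Ring

section RCLike

open scoped ComplexOrder MatrixOrder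

variable {n k 𝕜 : Type*} [Fintype n] [Fintype k] [RCLike 𝕜]

theorem trace_mul_nonneg_of_posSemidef {A B : Matrix n n 𝕜} (hA : A.PosSemidef)
    (hB : B.PosSemidef) : 0 ≤ (A * B).trace := by
  classical
  obtain ⟨y, rfl⟩ := CStarAlgebra.nonneg_iff_eq_star_mul_self.mp hB.nonneg
  rw [star_eq_conjTranspose, ← Matrix.mul_assoc, trace_mul_comm, ← Matrix.mul_assoc]
  exact (hA.mul_mul_conjTranspose_same y).trace_nonneg

variable [DecidableEq n]

theorem posSemidef_sqrt_eq_cfc_sqrt {A : Matrix n n 𝕜} (hA : A.PosSemidef) :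
    hA.sqrt = CFC.sqrt A := by
  rw [CFC.sqrt_eq_real_sqrt A hA.nonneg, cfcₙ_eq_cfc, hA.1.cfc_eq]
  rfl

theorem isHermitian_posSemidef_sqrt {A : Matrix n n 𝕜} (hA : A.PosSemidef) :
    hA.sqrt.IsHermitian := by
  rw [posSemidef_sqrt_eq_cfc_sqrt]
  exact (CFC.sqrt_nonneg A).posSemidef.isHermitian

theorem posSemidef_sqrt_mul_self {A : Matrix n n 𝕜} (hA : A.PosSemidef) :
    hA.sqrt * hA.sqrt = A := by
  rw [posSemidef_sqrt_eq_cfc_sqrt, CFC.sqrt_mul_sqrt_self A hA.nonneg]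

theorem det_one_add_eq_prod_one_add_eigenvalues {A : Matrix n n 𝕜} (hA : A.IsHermitian) :
    (1 + A).det = ∏ i, (1 + (hA.eigenvalues i : 𝕜)) := by
  conv_lhs => rw [hA.spectral_theorem, Unitary.conjStarAlgAut_apply, Matrix.mul_assoc]
  rw [det_one_add_mul_comm, Matrix.mul_assoc, Unitary.coe_star_mul_self, Matrix.mul_one,
    ← diagonal_one, diagonal_add, det_diagonal]
  rfl

theorem one_le_det_one_add_of_posSemidef {A : Matrix n n 𝕜} (hA : A.PosSemidef) :
    1 ≤ (1 + A).det := by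
  rw [det_one_add_eq_prod_one_add_eigenvalues hA.isHermitian]
  have one_le_factor (i : n) : 1 ≤ 1 + (hA.isHermitian.eigenvalues i : 𝕜) :=
    le_add_of_nonneg_right (RCLike.ofReal_nonneg.mpr (hA.eigenvalues_nonneg i))
  simpa only [Finset.prod_const_one] using
    Finset.prod_le_prod (s := Finset.univ) (fun _ _ => zero_le_one) fun i _ => one_le_factor i

variable [DecidableEq k]

theorem stmt_10_general {q y : Matrix n n 𝕜} (hq : q.PosSemidef) (hy : y.PosSemidef)
    (r : Matrix n k 𝕜) :
    IsUnit (1 + q * (r * rᴴ)) ∧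
    (1 + q * (r * rᴴ)).det = (1 + rᴴ * q * r).det ∧
    1 ≤ (1 + q * (r * rᴴ)).det ∧
    0 ≤ (r * (1 + rᴴ * q * r)⁻¹ * rᴴ * y).trace ∧
    ∀ α : ℝ, 0 ≤ α →
      (RCLike.re (1 + q * (r * rᴴ)).det) ^ (-(α / 2)) *
        Real.exp (-RCLike.re (r * (1 + rᴴ * q * r)⁻¹ * rᴴ * y).trace) ≤ 1 := by
  have hp : (rᴴ * q * r).PosSemidef := hq.conjTranspose_mul_mul_same r
  have det_eq := det_one_add_mul_mul_comm q r rᴴ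
  have one_le_det : 1 ≤ (1 + q * (r * rᴴ)).det :=
    det_eq ▸ one_le_det_one_add_of_posSemidef hp
  have conj_inv_posSemidef : (r * (1 + rᴴ * q * r)⁻¹ * rᴴ).PosSemidef :=
    (PosSemidef.one.add hp).inv.mul_mul_conjTranspose_same r
  have trace_nonneg := trace_mul_nonneg_of_posSemidef conj_inv_posSemidef hy
  refine ⟨?_, det_eq, one_le_det, trace_nonneg, fun α hα => ?_⟩
  · rw [isUnit_iff_isUnit_det]
    exact (zero_lt_one.trans_le one_le_det).ne'.isUnit
  · have one_le_re_det : 1 ≤ RCLike.re (1 + q * (r * rᴴ)).det := by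
      simpa only [RCLike.one_re] using RCLike.re_monotone one_le_det
    have re_trace_nonneg := (RCLike.nonneg_iff.mp trace_nonneg).1
    exact mul_le_one₀ (Real.rpow_le_one_of_one_le_of_nonpos one_le_re_det (by linarith))
      (Real.exp_nonneg _) (Real.exp_le_one_iff.mpr (neg_nonpos.mpr re_trace_nonneg))

end RCLike

/-- For `w, q, x` symmetric positive semidefinite and `m` arbitrary:
(i) `I + 2qw` is invertible and `det(I + 2qw) = det(I + 2√w q √w) ≥ 1`;
(ii) `Tr(√w (I + 2√w q √w)⁻¹ √w m x mᵀ) ≥ 0`;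
(iii) for every `α ≥ 0`,
`det(I + 2qw)^{−α/2} exp(−Tr(√w (I + 2√w q √w)⁻¹ √w m x mᵀ)) ≤ 1`. -/
theorem stmt_10 (d : ℕ) (w q x m : Matrix (Fin d) (Fin d) ℝ)
    (hw : w.PosSemidef) (hq : q.PosSemidef) (hx : x.PosSemidef) :
    IsUnit (1 + (2:ℝ) • (q * w)) ∧
    (1 + (2:ℝ) • (q * w)).det = (1 + (2:ℝ) • (hw.sqrt * q * hw.sqrt)).det ∧
    1 ≤ (1 + (2:ℝ) • (q * w)).det ∧
    0 ≤ (hw.sqrt * (1 + (2:ℝ) • (hw.sqrt * q * hw.sqrt))⁻¹ * hw.sqrt * (m * x * mᵀ)).trace ∧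
    ∀ α : ℝ, 0 ≤ α →
      ((1 + (2:ℝ) • (q * w)).det) ^ (-(α / 2)) *
        Real.exp (-(hw.sqrt * (1 + (2:ℝ) • (hw.sqrt * q * hw.sqrt))⁻¹ * hw.sqrt *
          (m * x * mᵀ)).trace) ≤ 1 := by
  have sqrt_transpose : hw.sqrtᵀ = hw.sqrt := by
    rw [← conjTranspose_eq_transpose_of_trivial, isHermitian_posSemidef_sqrt hw]
  simpa [sqrt_transpose, posSemidef_sqrt_mul_self hw] using
    stmt_10_general (hq.smul (zero_le_two (α := ℝ))) (hx.mul_mul_conjTranspose_same m) hw.sqrt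
end

section
/- Let a, b be real d×d matrices such that b·(aᵀa) = (aᵀa)·b, and let t > 0. Set M := ∫₀ᵗ exp(sb) exp(sbᵀ) ds. Then M is symmetric positive definite, aᵀa commutes with M, and ∫₀ᵗ exp(sb) aᵀa exp(sbᵀ) ds = √M · (aᵀa) · √M, where √M is the positive definite square root of M. -/
open Matrix MeasureTheory
open scoped MatrixOrder

/-!
The matrix `S = aᵀa` commutes with `b` and, being symmetric, with `bᵀ`. Hence it commutes with
both exponentials and can be pulled out of the integral, which becomes `S * M`.
Positive definiteness of the integrand passes to `M`, and `√M`, being a function of `M`, commutes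
with `S` as well, so that `S * M = S * √M * √M = √M * S * √M`.
-/

section CommutingIntegrals

lemma sqrt_mul_mul_sqrt_of_commute {A : Type*} [PartialOrder A] [NonUnitalRing A]
    [TopologicalSpace A] [StarRing A] [Module ℝ A] [SMulCommClass ℝ A A] [IsScalarTower ℝ A A]
    [StarOrderedRing A] [NonUnitalContinuousFunctionalCalculus ℝ A IsSelfAdjoint]
    [NonnegSpectrumClass ℝ A] [IsTopologicalRing A] [T2Space A] {M S : A}
    (hM : 0 ≤ M) (hSM : Commute S M) :
    CFC.sqrt M * S * CFC.sqrt M = S * M := by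
  have hS : Commute (CFC.sqrt M) S := hSM.symm.cfcₙ_nnreal _
  rw [hS.eq, mul_assoc, CFC.sqrt_mul_sqrt_self M hM]

variable {X A : Type*} [MeasurableSpace X] {μ : Measure X} [NonUnitalNormedRing A]
  [NormedSpace ℝ A] [IsScalarTower ℝ A A] [SMulCommClass ℝ A A] {S : A}

lemma commute_integral {f : X → A} (hf : Integrable f μ) (hS : ∀ᵐ x ∂μ, Commute S (f x)) :
    Commute S (∫ x, f x ∂μ) := by
  rw [Commute, SemiconjBy, ← integral_const_mul_of_integrable hf,
    ← integral_mul_const_of_integrable hf]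
  exact integral_congr_ae hS

lemma integral_mul_mul_of_commute {f g : X → A} (hfg : Integrable (fun x ↦ f x * g x) μ)
    (hS : ∀ᵐ x ∂μ, Commute S (f x)) :
    ∫ x, f x * S * g x ∂μ = S * ∫ x, f x * g x ∂μ := by
  rw [← integral_const_mul_of_integrable hfg]
  refine integral_congr_ae (hS.mono fun x hx ↦ ?_)
  simp only [← hx.eq, mul_assoc]

end CommutingIntegrals

lemma integral_pos_of_ae_pos {X : Type*} [MeasurableSpace X] {μ : Measure X} [NeZero μ]
    {f : X → ℝ} (hf : Integrable f μ) (hpos : ∀ᵐ x ∂μ, 0 < f x) : 0 < ∫ x, f x ∂μ := by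
  have hnonneg : 0 ≤ᵐ[μ] f := hpos.mono fun _ hx ↦ hx.le
  refine (integral_nonneg_of_ae hnonneg).lt_of_ne' fun hzero ↦ ?_
  obtain ⟨x, hx, hx0⟩ :=
    (hpos.and ((integral_eq_zero_iff_of_nonneg_ae hnonneg hf).1 hzero)).exists
  exact hx.ne' hx0

section RCLike

open scoped ComplexOrder Matrix.Norms.L2Operator

variable {m n 𝕜 : Type*} [Fintype m] [Fintype n] [DecidableEq n] [RCLike 𝕜]

/-- The real normed space structure underlying the `𝕜`-linear one of the operator norm, needed for
Bochner integration. It reuses the entrywise real scalar multiplication, which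
`NormedSpace.restrictScalars` would replace. -/
noncomputable local instance : NormedSpace ℝ (Matrix m n 𝕜) where
  norm_smul_le r A := by
    rw [← algebraMap_smul 𝕜 r A, norm_smul, norm_algebraMap']

section Integral

variable {X : Type*} [MeasurableSpace X] {μ : Measure X}

lemma integral_matrix_apply {F : X → Matrix m n 𝕜} (hF : Integrable F μ)
    (i : m) (j : n) : (∫ x, F x ∂μ) i j = ∫ x, F x i j ∂μ :=
  ((Matrix.entryLinearMap ℝ 𝕜 i j).toContinuousLinearMap.integral_comp_comm hF).symm

lemma of_intervalIntegral_eq_setIntegral {ν : Measure ℝ} {F : ℝ → Matrix m n 𝕜} {t₀ t₁ : ℝ}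
    (ht : t₀ ≤ t₁) (hF : IntegrableOn F (Set.Ioc t₀ t₁) ν) :
    (Matrix.of fun i j ↦ ∫ s in t₀..t₁, F s i j ∂ν) = ∫ s in Set.Ioc t₀ t₁, F s ∂ν := by
  ext i j
  rw [integral_matrix_apply hF, of_apply, intervalIntegral.integral_of_le ht]

lemma isHermitian_integral {F : X → Matrix n n 𝕜} (hF : ∀ᵐ x ∂μ, (F x).IsHermitian) :
    (∫ x, F x ∂μ).IsHermitian :=
  calc (∫ x, F x ∂μ)ᴴ = ∫ x, (F x)ᴴ ∂μ :=
        ((starL' ℝ : Matrix n n 𝕜 ≃L[ℝ] Matrix n n 𝕜).integral_comp_comm F).symm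
    _ = ∫ x, F x ∂μ := integral_congr_ae hF

lemma posDef_integral [NeZero μ] {F : X → Matrix n n 𝕜} (hF : Integrable F μ)
    (hpos : ∀ᵐ x ∂μ, (F x).PosDef) : (∫ x, F x ∂μ).PosDef := by
  have hherm : (∫ x, F x ∂μ).IsHermitian := isHermitian_integral (hpos.mono fun _ hx ↦ hx.1)
  refine .of_dotProduct_mulVec_pos hherm fun z hz ↦ ?_
  let q : Matrix n n 𝕜 →L[ℝ] ℝ := LinearMap.toContinuousLinearMap
    { toFun := fun M ↦ RCLike.re (star z ⬝ᵥ (M *ᵥ z))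
      map_add' := fun M N ↦ by simp only [add_mulVec, dotProduct_add, map_add]
      map_smul' := fun r M ↦ by
        simp only [smul_mulVec, dotProduct_smul, RCLike.smul_re, RingHom.id_apply, smul_eq_mul] }
  have hq : 0 < q (∫ x, F x ∂μ) := by
    rw [← q.integral_comp_comm hF]
    exact integral_pos_of_ae_pos (q.integrable_comp hF)
      (hpos.mono fun x hx ↦ (RCLike.pos_iff.1 (hx.dotProduct_mulVec_pos hz)).1)
  exact RCLike.pos_iff.2 ⟨hq, hherm.im_star_dotProduct_mulVec_self z⟩

end Integral

lemma continuous_exp_smul (b : Matrix n n 𝕜) :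
    Continuous fun s : ℝ ↦ NormedSpace.exp (s • b) := by
  let : NormedAlgebra ℝ (Matrix n n 𝕜) := { norm_smul_le := norm_smul_le }
  let : NormedAlgebra ℚ (Matrix n n 𝕜) := .restrictScalars ℚ ℝ _
  fun_prop

lemma posDef_exp_mul_exp_conjTranspose (b : Matrix n n 𝕜) :
    (NormedSpace.exp b * NormedSpace.exp bᴴ).PosDef := by
  rw [exp_conjTranspose]
  exact .mul_conjTranspose_self _ (vecMul_injective_of_isUnit (isUnit_exp b))

theorem stmt_11_general {S b : Matrix n n 𝕜} (hb : Commute S b) (hb' : Commute S bᴴ)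
    {t : ℝ} (ht : 0 < t) :
    let M : Matrix n n 𝕜 := Matrix.of fun i j ↦
      ∫ s in (0 : ℝ)..t, (NormedSpace.exp (s • b) * NormedSpace.exp (s • bᴴ)) i j
    M.PosDef ∧ Commute S M ∧
      (Matrix.of fun i j ↦
        ∫ s in (0 : ℝ)..t, (NormedSpace.exp (s • b) * S * NormedSpace.exp (s • bᴴ)) i j) =
        CFC.sqrt M * S * CFC.sqrt M := by
  intro M
  have hexp (s : ℝ) : Commute S (NormedSpace.exp (s • b)) := (hb.smul_right s).exp_right
  have hexp' (s : ℝ) : Commute S (NormedSpace.exp (s • bᴴ)) := (hb'.smul_right s).exp_right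
  have hint : IntegrableOn (fun s : ℝ ↦ NormedSpace.exp (s • b) * NormedSpace.exp (s • bᴴ))
      (Set.Ioc 0 t) :=
    (((continuous_exp_smul b).mul (continuous_exp_smul bᴴ)).intervalIntegrable 0 t).1
  have hintS : IntegrableOn
      (fun s : ℝ ↦ NormedSpace.exp (s • b) * S * NormedSpace.exp (s • bᴴ)) (Set.Ioc 0 t) :=
    ((((continuous_exp_smul b).mul_const S).mul
      (continuous_exp_smul bᴴ)).intervalIntegrable 0 t).1
  have hM : M = ∫ s in Set.Ioc 0 t, NormedSpace.exp (s • b) * NormedSpace.exp (s • bᴴ) :=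
    of_intervalIntegral_eq_setIntegral ht.le hint
  have : NeZero (volume.restrict (Set.Ioc 0 t)) := ⟨by simpa using ht⟩
  have hpos : M.PosDef := by
    rw [hM]
    refine posDef_integral hint (.of_forall fun s ↦ ?_)
    simpa using posDef_exp_mul_exp_conjTranspose (s • b)
  have hSM : Commute S M := by
    rw [hM]
    exact commute_integral hint (.of_forall fun s ↦ (hexp s).mul_right (hexp' s))
  refine ⟨hpos, hSM, ?_⟩
  rw [sqrt_mul_mul_sqrt_of_commute hpos.posSemidef.nonneg hSM,
    of_intervalIntegral_eq_setIntegral ht.le hintS, hM]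
  exact integral_mul_mul_of_commute hint (.of_forall hexp)

end RCLike

/-- If `b` commutes with `aᵀa` and `t > 0`, then
`M := ∫₀ᵗ exp(sb) exp(sbᵀ) ds` is symmetric positive definite, commutes with `aᵀa`, and
`∫₀ᵗ exp(sb) aᵀa exp(sbᵀ) ds = √M (aᵀa) √M`. -/
theorem stmt_11 (d : ℕ) (a b : Matrix (Fin d) (Fin d) ℝ)
    (hcomm : b * (aᵀ * a) = (aᵀ * a) * b) (t : ℝ) (ht : 0 < t) :
    let M : Matrix (Fin d) (Fin d) ℝ :=
      Matrix.of fun i j =>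
        ∫ s in (0:ℝ)..t, (NormedSpace.exp (s • b) * NormedSpace.exp (s • bᵀ)) i j
    ∃ hM : M.PosDef,
      (aᵀ * a) * M = M * (aᵀ * a) ∧
      (Matrix.of fun i j =>
          ∫ s in (0:ℝ)..t,
            (NormedSpace.exp (s • b) * (aᵀ * a) * NormedSpace.exp (s • bᵀ)) i j) =
        CFC.sqrt M * (aᵀ * a) * CFC.sqrt M := by
  have hb : Commute (aᵀ * a) b := hcomm.symm
  have hb' : Commute (aᵀ * a) bᴴ := by
    simpa [star_eq_conjTranspose] using hb.star_star
  obtain ⟨hM, hSM, hint⟩ := stmt_11_general hb hb' ht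
  exact ⟨hM, hSM.eq, hint⟩
end

section
/- Let d ≥ 2 and let y be a real symmetric positive semidefinite d×d matrix. Suppose the (d−1)×(d−1) submatrix (y_{i,j})_{2≤i,j≤d} equals [[c_r, 0],[k_r, 0]] · [[c_rᵀ, k_rᵀ],[0, 0]], where c_r is an invertible r×r real matrix and k_r is a (d−1−r)×r real matrix. Write y₁^r := (y_{1,i+1})_{1≤i≤r} ∈ ℝ^r and y₁^{r,d} := (y_{1,i+1})_{r+1≤i≤d−1} ∈ ℝ^{d−1−r}. Then y₁^{r,d} = k_r · c_r⁻¹ · y₁^r. -/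
open Matrix

/-!
A linear relation between the rows of a principal submatrix of a positive semidefinite matrix also
holds between the full rows: writing the matrix as `Bᴴ B` and the principal submatrix as `Cᴴ C`,
with `C` formed by columns of `B`, `v Cᴴ C = 0` forces `v Cᴴ = 0`, hence `v Cᴴ B = 0`.
In `[[c, 0], [k, 0]] N` with `c` invertible, the bottom rows are `k c⁻¹` times the top rows, and
this relation extends to the entries outside the block.
-/

section RowElimination

variable {R a b p : Type*} [CommRing R] [Fintype a] [DecidableEq a] [Fintype b] [DecidableEq b]

lemma fromCols_neg_mul_inv_one_mul_fromBlocks {c : Matrix a a R} (hc : IsUnit c)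
    (k : Matrix b a R) :
    fromCols (-(k * c⁻¹)) (1 : Matrix b b R) * fromBlocks c (0 : Matrix a p R) k 0 = 0 := by
  have hkc : k * c⁻¹ * c = k :=
    nonsing_inv_mul_cancel_right c k ((isUnit_iff_isUnit_det c).mp hc)
  simp [fromCols_mul_fromBlocks, hkc]

end RowElimination

section PosSemidef

open scoped ComplexOrder

variable {𝕜 l m n : Type*} [RCLike 𝕜] {M : Matrix m m 𝕜}

open scoped MatrixOrder in
lemma mul_submatrix_id_eq_zero_of_posSemidef [Fintype n] (hM : M.PosSemidef) (f : n → m)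
    {X : Matrix l n 𝕜} (hX : X * M.submatrix f f = 0) : X * M.submatrix f id = 0 := by
  classical
  ext i j
  -- As `m` may be infinite, only the indices in the range of `f` and `j` are kept.
  have hMj : (M.submatrix _ _).PosSemidef := hM.submatrix (Sum.elim f fun _ : Unit ↦ j)
  obtain ⟨B, hB⟩ := CStarAlgebra.nonneg_iff_eq_star_mul_self.mp hMj.nonneg
  set C := B.submatrix id Sum.inl
  have hff : M.submatrix f f = Cᴴ * C := congrArg (submatrix · Sum.inl Sum.inl) hB
  have hfj : M.submatrix f (fun _ : Unit ↦ j) = Cᴴ * B.submatrix id Sum.inr :=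
    congrArg (submatrix · Sum.inl Sum.inr) hB
  have hXC : X * Cᴴ = 0 := by rwa [hff, mul_conjTranspose_mul_self_eq_zero] at hX
  have hXj : X * M.submatrix f (fun _ : Unit ↦ j) = 0 := by
    rw [hfj, ← Matrix.mul_assoc, hXC, Matrix.zero_mul]
  exact congrFun₂ hXj i ()

theorem stmt_13_general {a b p : Type*} [Fintype a] [DecidableEq a] [Finite b] [Fintype p]
    (hM : M.PosSemidef) (f : a ⊕ b → m) {c : Matrix a a 𝕜} (hc : IsUnit c) (k : Matrix b a 𝕜)
    (N : Matrix (a ⊕ p) (a ⊕ b) 𝕜)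
    (hblock : M.submatrix f f = fromBlocks c (0 : Matrix a p 𝕜) k 0 * N) :
    M.submatrix (f ∘ Sum.inr) id = k * c⁻¹ * M.submatrix (f ∘ Sum.inl) id := by
  classical
  have := Fintype.ofFinite b
  have hrows : M.submatrix f id =
      fromRows (M.submatrix (f ∘ Sum.inl) id) (M.submatrix (f ∘ Sum.inr) id) := by
    ext (_ | _) _ <;> rfl
  have hzero : fromCols (-(k * c⁻¹)) (1 : Matrix b b 𝕜) * M.submatrix f id = 0 := by
    apply mul_submatrix_id_eq_zero_of_posSemidef hM
    rw [hblock, ← Matrix.mul_assoc, fromCols_neg_mul_inv_one_mul_fromBlocks hc, Matrix.zero_mul]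
  rw [hrows, fromCols_mul_fromRows, Matrix.neg_mul, Matrix.one_mul, neg_add_eq_zero] at hzero
  exact hzero.symm

end PosSemidef

/-- Let `y` be symmetric positive semidefinite of size `d = n+1 ≥ 2`, and
suppose its lower-right `n×n` submatrix equals `[[c_r,0],[k_r,0]]·[[c_rᵀ,k_rᵀ],[0,0]]` with
`c_r` invertible. Writing `y₁^r` and `y₁^{r,d}` for the first and last parts of the first row
(off-diagonal), we have `y₁^{r,d} = k_r c_r⁻¹ y₁^r`. -/
theorem stmt_13 (n : ℕ) (hn : 1 ≤ n) (r : ℕ) (hr : r ≤ n)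
    (y : Matrix (Fin (n + 1)) (Fin (n + 1)) ℝ) (hy : y.PosSemidef)
    (c_r : Matrix (Fin r) (Fin r) ℝ) (hcr : IsUnit c_r)
    (k_r : Matrix (Fin (n - r)) (Fin r) ℝ)
    (hblock : y.submatrix Fin.succ Fin.succ =
      Matrix.reindex (finSumFinEquiv.trans (finCongr (Nat.add_sub_cancel' hr)))
        (finSumFinEquiv.trans (finCongr (Nat.add_sub_cancel' hr)))
        (Matrix.fromBlocks c_r 0 k_r 0 * Matrix.fromBlocks c_rᵀ k_rᵀ 0 0)) :
    (fun i : Fin (n - r) =>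
        y 0 (Fin.succ ((finSumFinEquiv.trans (finCongr (Nat.add_sub_cancel' hr))) (Sum.inr i)))) =
      (k_r * c_r⁻¹).mulVec
        (fun i : Fin r =>
          y 0 (Fin.succ ((finSumFinEquiv.trans (finCongr (Nat.add_sub_cancel' hr))) (Sum.inl i)))) := by
  set e := finSumFinEquiv.trans (finCongr (Nat.add_sub_cancel' hr))
  have hcol := stmt_13_general hy (Fin.succ ∘ e) hcr k_r (fromBlocks c_rᵀ k_rᵀ 0 0)
    (by simpa using! congrArg (submatrix · e e) hblock)
  have hsymm (j) : y 0 j = y j 0 := (hy.isHermitian.apply 0 j).symm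
  simp only [hsymm]
  exact congrArg (col · 0) hcol
end

section
/- Let d ≥ 2 and let x be a real symmetric positive semidefinite d×d matrix. Suppose the (d−1)×(d−1) submatrix (x_{i,j})_{2≤i,j≤d} equals c cᵀ where c = [[c_r, 0],[k_r, 0]] with c_r an invertible lower triangular r×r real matrix and k_r a (d−1−r)×r real matrix. Then x_{1,1} ≥ Σ_{k=1}^r ( Σ_{l=1}^r (c_r⁻¹)_{k,l} x_{1,l+1} )². -/
open Matrix

/-!
A positive semidefinite matrix `x` is a Gram matrix. If `G * x * Gᴴ = 1`, then the rows of `G`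
combine the underlying vectors into an orthonormal family, and the claim is Bessel's inequality
for the vector with index `1`, where `G` is `c_r⁻¹` on the indices `2, …, r + 1` and zero
elsewhere. Algebraically, Bessel's inequality is the diagonal of the identity
`x - (G * x)ᴴ * (G * x) = (1 - Gᴴ * G * x)ᴴ * x * (1 - Gᴴ * G * x)`.
-/

section Bessel

variable {ι κ μ R : Type*} [Ring R] [StarRing R]

lemma sub_conjTranspose_mul_self_eq_of_mul_mul_conjTranspose_eq_one
    [Fintype ι] [DecidableEq ι] [Fintype μ] [DecidableEq μ]
    {A : Matrix ι ι R} (hA : A.IsHermitian) {G : Matrix μ ι R} (hG : G * A * Gᴴ = 1) :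
    A - (G * A)ᴴ * (G * A) = (1 - Gᴴ * G * A)ᴴ * A * (1 - Gᴴ * G * A) := by
  have hadj : (1 - Gᴴ * G * A)ᴴ = 1 - A * Gᴴ * G := by
    simp only [conjTranspose_sub, conjTranspose_one, conjTranspose_mul,
      conjTranspose_conjTranspose, hA.eq, Matrix.mul_assoc]
  have hkill : G * A * (1 - Gᴴ * G * A) = 0 := by
    rw [Matrix.mul_sub, Matrix.mul_one, ← Matrix.mul_assoc, ← Matrix.mul_assoc, hG,
      Matrix.one_mul, sub_self]
  calc A - (G * A)ᴴ * (G * A)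
      = A * (1 - Gᴴ * G * A) := by
        simp only [conjTranspose_mul, hA.eq, Matrix.mul_sub, Matrix.mul_one, Matrix.mul_assoc]
    _ = A * (1 - Gᴴ * G * A) - A * Gᴴ * (G * A * (1 - Gᴴ * G * A)) := by
        rw [hkill, Matrix.mul_zero, sub_zero]
    _ = (1 - A * Gᴴ * G) * A * (1 - Gᴴ * G * A) := by
        rw [Matrix.sub_mul 1, Matrix.sub_mul (1 * A), Matrix.one_mul]
        simp only [Matrix.mul_assoc]
    _ = (1 - Gᴴ * G * A)ᴴ * A * (1 - Gᴴ * G * A) := by rw [hadj]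

lemma posSemidef_sub_conjTranspose_mul_self_of_mul_mul_conjTranspose_eq_one [PartialOrder R]
    [Fintype ι] [Fintype μ] [DecidableEq μ]
    {A : Matrix ι ι R} (hA : A.PosSemidef) {G : Matrix μ ι R} (hG : G * A * Gᴴ = 1) :
    (A - (G * A)ᴴ * (G * A)).PosSemidef := by
  classical
  rw [sub_conjTranspose_mul_self_eq_of_mul_mul_conjTranspose_eq_one hA.isHermitian hG]
  exact hA.conjTranspose_mul_mul_same _

lemma star_mulVec_dotProduct_mulVec_le_diag [PartialOrder R] [IsOrderedAddMonoid R]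
    [Fintype κ] [Fintype μ] [DecidableEq μ] {x : Matrix ι ι R} (hx : x.PosSemidef)
    (i : ι) (e : κ → ι) {G : Matrix μ κ R} (hG : G * x.submatrix e e * Gᴴ = 1) :
    star (G *ᵥ fun l => x (e l) i) ⬝ᵥ (G *ᵥ fun l => x (e l) i) ≤ x i i := by
  -- `i` may lie in the range of `e`, so it gets an index of its own, on which `H` vanishes.
  let f : Option κ → ι := (Option.elim · i e)
  let H : Matrix μ (Option κ) R := Matrix.of fun k => (Option.elim · 0 (G k))
  have hHx : H * x.submatrix f f = G * x.submatrix e f := by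
    ext k o
    simp [H, f, Matrix.mul_apply]
  have hH : H * x.submatrix f f * Hᴴ = 1 := by
    rw [hHx, ← hG]
    ext j k
    simp [H, f, Matrix.mul_apply]
  have hdiag :=
    (posSemidef_sub_conjTranspose_mul_self_of_mul_mul_conjTranspose_eq_one
      (hx.submatrix f) hH).diag_nonneg (i := none)
  rw [hHx] at hdiag
  exact sub_nonneg.1 hdiag

end Bessel

lemma submatrix_eq_mul_transpose_of_reindex_fromBlocks {ι κ μ ν ρ τ R : Type*}
    [NonUnitalNonAssocSemiring R] [Fintype ρ] [Fintype τ] {x : Matrix ι ι R} {f : ν → ι}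
    {σ : κ ⊕ μ ≃ ν} {c : Matrix κ ρ R} {k : Matrix μ ρ R}
    (hx : x.submatrix f f = reindex σ σ
      (fromBlocks c (0 : Matrix κ τ R) k 0 * (fromBlocks c (0 : Matrix κ τ R) k 0)ᵀ)) :
    x.submatrix (fun l => f (σ (Sum.inl l))) (fun l => f (σ (Sum.inl l))) = c * cᵀ := by
  ext i j
  have hij := congrFun₂ hx (σ (Sum.inl i)) (σ (Sum.inl j))
  simpa [fromBlocks_transpose, fromBlocks_multiply] using hij

open scoped ComplexOrder in
theorem stmt_14_general {ι κ 𝕜 : Type*} [RCLike 𝕜] [Fintype κ] [DecidableEq κ]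
    {x : Matrix ι ι 𝕜} (hx : x.PosSemidef) (i : ι) (e : κ → ι) {c : Matrix κ κ 𝕜}
    (hc : IsUnit c) (hxc : x.submatrix e e = c * cᴴ) :
    ∑ k, ‖∑ l, c⁻¹ k l * star (x i (e l))‖ ^ 2 ≤ RCLike.re (x i i) := by
  have hdet : IsUnit c.det := (isUnit_iff_isUnit_det c).1 hc
  have horth : c⁻¹ * x.submatrix e e * c⁻¹ᴴ = 1 := by
    rw [hxc, nonsing_inv_mul_cancel_left _ _ hdet, ← conjTranspose_mul, nonsing_inv_mul _ hdet,
      conjTranspose_one]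
  have hnorm : star (c⁻¹ *ᵥ fun l => x (e l) i) ⬝ᵥ (c⁻¹ *ᵥ fun l => x (e l) i) =
      ((∑ k, ‖∑ l, c⁻¹ k l * star (x i (e l))‖ ^ 2 : ℝ) : 𝕜) := by
    simp only [hx.isHermitian.apply, dotProduct, mulVec, Pi.star_apply, RCLike.star_def,
      RCLike.conj_mul, RCLike.ofReal_sum, RCLike.ofReal_pow]
  have hbessel := star_mulVec_dotProduct_mulVec_le_diag hx i e horth
  rw [hnorm] at hbessel
  simpa only [RCLike.ofReal_re] using (RCLike.le_iff_re_im.1 hbessel).1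

/-- Let `x` be symmetric positive semidefinite of size `d = n+1 ≥ 2`, and
suppose its lower-right `n×n` submatrix equals `c cᵀ` with `c = [[c_r,0],[k_r,0]]`, `c_r`
invertible lower triangular. Then
`x_{1,1} ≥ Σ_{k=1}^r (Σ_{l=1}^r (c_r⁻¹)_{k,l} x_{1,l+1})²`. -/
theorem stmt_14 (n : ℕ) (hn : 1 ≤ n) (r : ℕ) (hr : r ≤ n)
    (x : Matrix (Fin (n + 1)) (Fin (n + 1)) ℝ) (hx : x.PosSemidef)
    (c_r : Matrix (Fin r) (Fin r) ℝ) (hcr : IsUnit c_r)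
    (hlow : ∀ i j : Fin r, i < j → c_r i j = 0)
    (k_r : Matrix (Fin (n - r)) (Fin r) ℝ)
    (hblock : x.submatrix Fin.succ Fin.succ =
      Matrix.reindex (finSumFinEquiv.trans (finCongr (Nat.add_sub_cancel' hr)))
        (finSumFinEquiv.trans (finCongr (Nat.add_sub_cancel' hr)))
        (Matrix.fromBlocks c_r 0 k_r 0 * (Matrix.fromBlocks c_r 0 k_r 0)ᵀ)) :
    ∑ k : Fin r,
        (∑ l : Fin r,
          c_r⁻¹ k l *
            x 0 (Fin.succ
              ((finSumFinEquiv.trans (finCongr (Nat.add_sub_cancel' hr))) (Sum.inl l)))) ^ 2 ≤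
      x 0 0 := by
  have hlead := submatrix_eq_mul_transpose_of_reindex_fromBlocks hblock
  simpa using stmt_14_general hx 0 _ hcr (by simpa using hlead)
end

section
/- Let B be a linear endomorphism of the space S_d(ℝ) of real symmetric d×d matrices satisfying condition (★): for all positive semidefinite x₁, x₂ ∈ S_d(ℝ) with Tr(x₁x₂) = 0, one has Tr(B(x₁)x₂) ≥ 0. Let ᾱ and x be real symmetric positive semidefinite d×d matrices. Then for every t ≥ 0, the matrix exp(tB)(x) + ∫₀ᵗ exp(sB)(ᾱ) ds is positive semidefinite, where exp(tB) := Σ_{k=0}^∞ tᵏ Bᵏ / k! is the exponential of the endomorphism B. Equivalently, the unique solution of the linear ODE x'(t) = ᾱ + B(x(t)) with x(0) = x takes values in the positive semidefinite cone for all t ≥ 0. -/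
open Matrix MeasureTheory

attribute [local instance] Matrix.normedAddCommGroup Matrix.normedSpace

/-!
A solution of `f' = v(f)` whose Lipschitz field `v` does not point out of a closed convex set `K`
of a Hilbert space stays in `K`. Indeed, let `p` be the nearest point of `K` to `f t`. Since
`f t - p` is an outward normal to `K` at `p`, the squared distance from `f` to `K` has upper right
derivative at most `2 ⟪f t - p, v (f t)⟫ ≤ 2 ⟪f t - p, v (f t) - v p⟫ ≤ 2 L ‖f t - p‖ ^ 2`, so
Grönwall's inequality keeps it equal to zero.

For a closed convex cone, an outward normal at `p` is `-y` with `y` in the dual cone and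
`⟪p, y⟫ = 0`. For the inner product `⟪x, y⟫ = Re Tr(xᴴ y)`, the dual of the positive semidefinite
cone consists of the matrices with positive semidefinite Hermitian part. As `B` preserves Hermitian
matrices, (★) therefore says that the affine field `z ↦ α + B z` does not point out of the cone, and
`exp(tB) x + ∫₀ᵗ exp(sB) α ds` solves the corresponding differential equation.
-/

section InvariantConvexSet

open Metric Set Filter Topology RealInnerProductSpace NNReal

variable {E : Type*} [NormedAddCommGroup E] [InnerProductSpace ℝ E]

/-- The normal cone of convex analysis to a set `K` at the point `p`, used to express that a vector
field does not point out of `K`. The point `p` is not required to belong to `K`. -/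
def outwardNormals (K : Set E) (p : E) : Set E :=
  {y | ∀ q ∈ K, ⟪y, q - p⟫ ≤ 0}

lemma exists_infDist_eq_norm_sub_and_mem_outwardNormals {K : Set E} (hK : Convex ℝ K)
    (hKc : IsComplete K) (hne : K.Nonempty) (u : E) :
    ∃ p ∈ K, infDist u K = ‖u - p‖ ∧ u - p ∈ outwardNormals K p := by
  obtain ⟨p, hp, hmin⟩ := exists_norm_eq_iInf_of_complete_convex hne hKc hK u
  refine ⟨p, hp, ?_, (norm_eq_iInf_iff_real_inner_le_zero hK hp).1 hmin⟩
  simpa only [infDist_eq_iInf, dist_eq_norm] using hmin.symm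

lemma eventually_slope_infDist_sq_lt {K : Set E} {f : ℝ → E} {f' p : E} {t r : ℝ}
    (hf : HasDerivWithinAt f f' (Ici t) t) (hp : p ∈ K) (hdist : infDist (f t) K = ‖f t - p‖)
    (hr : 2 * ⟪f t - p, f'⟫ < r) :
    ∀ᶠ s in 𝓝[>] t, (s - t)⁻¹ * (infDist (f s) K ^ 2 - infDist (f t) K ^ 2) < r := by
  have hderiv : HasDerivWithinAt (‖f · - p‖ ^ 2) (2 * ⟪f t - p, f'⟫) (Ioi t) t :=
    (hf.mono Ioi_subset_Ici_self).sub_const p |>.norm_sq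
  have hslope := (hasDerivWithinAt_iff_tendsto_slope' self_notMem_Ioi).1 hderiv
  filter_upwards [hslope.eventually_lt_const hr, self_mem_nhdsWithin] with s hs hts
  refine lt_of_le_of_lt ?_ hs
  have hts' : 0 < s - t := sub_pos.2 hts
  rw [slope_def_field, div_eq_inv_mul, hdist]
  gcongr
  · exact infDist_nonneg
  · exact (infDist_le_dist_of_mem hp).trans_eq (dist_eq_norm _ _)

theorem mem_of_hasDerivWithinAt_of_inner_nonpos {K : Set E} (hK : Convex ℝ K) (hKc : IsComplete K)
    {v : ℝ → E → E} {L : ℝ≥0} {f : ℝ → E} {a b : ℝ} (hv : ∀ t ∈ Ico a b, LipschitzWith L (v t))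
    (hin : ∀ t ∈ Ico a b, ∀ p ∈ K, ∀ y ∈ outwardNormals K p, ⟪y, v t p⟫ ≤ 0)
    (hf : ContinuousOn f (Icc a b))
    (hf' : ∀ t ∈ Ico a b, HasDerivWithinAt f (v t (f t)) (Ici t) t) (ha : f a ∈ K) :
    ∀ t ∈ Icc a b, f t ∈ K := by
  choose p hpK hdist hnormal using
    fun t ↦ exists_infDist_eq_norm_sub_and_mem_outwardNormals hK hKc ⟨_, ha⟩ (f t)
  have hgrowth : ∀ t ∈ Ico a b,
      2 * ⟪f t - p t, v t (f t)⟫ ≤ 2 * L * infDist (f t) K ^ 2 + 0 := by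
    intro t ht
    have hlip : ⟪f t - p t, v t (f t) - v t (p t)⟫ ≤ L * ‖f t - p t‖ ^ 2 := calc
      _ ≤ ‖f t - p t‖ * ‖v t (f t) - v t (p t)‖ := real_inner_le_norm _ _
      _ ≤ ‖f t - p t‖ * (L * ‖f t - p t‖) := by gcongr; exact (hv t ht).norm_sub_le _ _
      _ = L * ‖f t - p t‖ ^ 2 := by ring
    rw [inner_sub_right] at hlip
    rw [hdist]
    linarith [hin t ht _ (hpK t) _ (hnormal t)]
  have hinit : infDist (f a) K ^ 2 ≤ 0 := by simp [infDist_zero_of_mem ha]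
  intro t ht
  have hbound := le_gronwallBound_of_liminf_deriv_right_le
    (((continuous_infDist_pt K).comp_continuousOn hf).pow 2)
    (fun s hs r hr ↦ (eventually_slope_infDist_sq_lt (hf' s hs) (hpK s) (hdist s) hr).frequently)
    hinit hgrowth t ht
  rw [gronwallBound_ε0_δ0] at hbound
  exact (hKc.isClosed.mem_iff_infDist_zero ⟨_, ha⟩).2 ((sq_nonpos_iff _).1 hbound)

end InvariantConvexSet

section CrossPositive

open RealInnerProductSpace

variable {E : Type*} [NormedAddCommGroup E] [InnerProductSpace ℝ E] [CompleteSpace E]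

/-- Cross-positivity (quasi-monotonicity) of a linear map with respect to a closed convex cone: the
abstract form of condition (★), with the trace form replaced by the inner product and the second
argument ranging over the dual cone. -/
def IsCrossPositive (C : ProperCone ℝ E) (A : E →ₗ[ℝ] E) : Prop :=
  ∀ x ∈ C, ∀ y ∈ ProperCone.innerDual (C : Set E), ⟪x, y⟫ = 0 → 0 ≤ ⟪A x, y⟫

lemma neg_mem_innerDual_and_inner_eq_zero_of_mem_outwardNormals {C : ProperCone ℝ E} {p y : E}
    (hp : p ∈ C) (hy : y ∈ outwardNormals (C : Set E) p) :
    -y ∈ ProperCone.innerDual (C : Set E) ∧ ⟪p, y⟫ = 0 := by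
  have hnonpos (q : E) (hq : q ∈ C) : ⟪q, y⟫ ≤ 0 := by
    simpa [real_inner_comm] using hy (q + p) (C.add_mem hq hp)
  refine ⟨fun q hq ↦ by simpa using hnonpos q hq, (hnonpos p hp).antisymm ?_⟩
  simpa [real_inner_comm] using hy 0 C.zero_mem

theorem IsCrossPositive.mem_of_hasDerivAt {C : ProperCone ℝ E} {A : E →L[ℝ] E}
    (hA : IsCrossPositive C A.toLinearMap) {α : E} (hα : α ∈ C) {f : ℝ → E}
    (hf : ∀ t, HasDerivAt f (α + A (f t)) t) (h0 : f 0 ∈ C) {t : ℝ} (ht : 0 ≤ t) : f t ∈ C := by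
  have hlip : LipschitzWith ‖A‖₊ fun z ↦ α + A z := by
    simpa using (LipschitzWith.const α).add A.lipschitz
  refine mem_of_hasDerivWithinAt_of_inner_nonpos (K := C) (v := fun _ z ↦ α + A z) (b := t)
    C.convex C.isClosed.isComplete (fun _ _ ↦ hlip) ?_
    (fun s _ ↦ (hf s).continuousAt.continuousWithinAt) (fun s _ ↦ (hf s).hasDerivWithinAt)
    h0 t ⟨ht, le_rfl⟩
  intro _ _ p hp y hy
  obtain ⟨hdual, hpy⟩ := neg_mem_innerDual_and_inner_eq_zero_of_mem_outwardNormals hp hy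
  have hαy : 0 ≤ ⟪α, -y⟫ := hdual hα
  have hApy : 0 ≤ ⟪A p, -y⟫ := hA p hp (-y) hdual (by simp [hpy])
  rw [inner_neg_right, real_inner_comm] at hαy hApy
  rw [inner_add_right]
  linarith

end CrossPositive

section Duhamel

open NormedSpace

variable {E : Type*} [NormedAddCommGroup E] [NormedSpace ℝ E]

/-- The value at time `t` of the solution of `f' = α + B f`, `f 0 = x` given by Duhamel's formula
`exp(tB) x + ∫₀ᵗ exp(sB) α ds`, where the exponential of `B` is applied through its power series. -/
noncomputable def duhamelSolution (B : Module.End ℝ E) (α x : E) (t : ℝ) : E :=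
  (∑' k : ℕ, (t ^ k / k.factorial : ℝ) • (B ^ k) x) +
    ∫ s in (0 : ℝ)..t, ∑' k : ℕ, (s ^ k / k.factorial : ℝ) • (B ^ k) α

lemma duhamelSolution_zero (B : Module.End ℝ E) (α x : E) : duhamelSolution B α x 0 = x := by
  have hpow : ∀ k ≠ 0, ((0 : ℝ) ^ k / k.factorial) • (B ^ k) x = 0 := by simp +contextual
  simp [duhamelSolution, tsum_eq_single 0 hpow]

lemma tsum_pow_div_factorial_smul_pow_apply [FiniteDimensional ℝ E] (B : Module.End ℝ E) (x : E)
    (t : ℝ) :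
    ∑' k : ℕ, (t ^ k / k.factorial : ℝ) • (B ^ k) x =
      exp (t • LinearMap.toContinuousLinearMap B) x := by
  have : CompleteSpace E := FiniteDimensional.complete ℝ E
  have hpow (k : ℕ) : (B ^ k) x = (LinearMap.toContinuousLinearMap B ^ k) x :=
    congr($(map_pow (Module.End.toContinuousLinearMap (𝕜 := ℝ) E) B k) x)
  have hsum := (ContinuousLinearMap.apply ℝ E x).hasSum
    (exp_series_hasSum_exp' (𝕂 := ℝ) (t • LinearMap.toContinuousLinearMap B))
  refine Eq.trans (tsum_congr fun k ↦ ?_) hsum.tsum_eq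
  simp [hpow, smul_pow, smul_smul, div_eq_inv_mul]

lemma hasDerivAt_exp_smul_apply [CompleteSpace E] (A : E →L[ℝ] E) (x : E) (t : ℝ) :
    HasDerivAt (fun s : ℝ ↦ exp (s • A) x) (A (exp (t • A) x)) t := by
  simpa using (hasDerivAt_exp_smul_const' (𝕂 := ℝ) A t).clm_apply (hasDerivAt_const t x)

lemma hasDerivAt_exp_smul_apply_add_integral [CompleteSpace E] (A : E →L[ℝ] E) (x α : E) (t : ℝ) :
    HasDerivAt (fun u : ℝ ↦ exp (u • A) x + ∫ s in (0 : ℝ)..u, exp (s • A) α)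
      (α + A (exp (t • A) x + ∫ s in (0 : ℝ)..t, exp (s • A) α)) t := by
  have hcont : Continuous fun s : ℝ ↦ exp (s • A) α :=
    continuous_iff_continuousAt.2 fun s ↦ (hasDerivAt_exp_smul_apply A α s).continuousAt
  have hFTC : α + A (∫ s in (0 : ℝ)..t, exp (s • A) α) = exp (t • A) α := by
    rw [← A.intervalIntegral_comp_comm (hcont.intervalIntegrable 0 t),
      intervalIntegral.integral_eq_sub_of_hasDerivAt
        (fun s _ ↦ hasDerivAt_exp_smul_apply A α s)
        ((A.continuous.comp hcont).intervalIntegrable 0 t)]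
    simp
  rw [map_add, add_left_comm, hFTC]
  exact (hasDerivAt_exp_smul_apply A x t).add (hcont.integral_hasStrictDerivAt 0 t).hasDerivAt

theorem hasDerivAt_duhamelSolution [FiniteDimensional ℝ E] (B : Module.End ℝ E) (α x : E) (t : ℝ) :
    HasDerivAt (duhamelSolution B α x) (α + B (duhamelSolution B α x t)) t := by
  have : CompleteSpace E := FiniteDimensional.complete ℝ E
  have hexp : duhamelSolution B α x = fun u ↦ exp (u • LinearMap.toContinuousLinearMap B) x +
      ∫ s in (0 : ℝ)..u, exp (s • LinearMap.toContinuousLinearMap B) α := by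
    ext u
    simp only [duhamelSolution, tsum_pow_div_factorial_smul_pow_apply]
  rw [hexp]
  exact hasDerivAt_exp_smul_apply_add_integral (LinearMap.toContinuousLinearMap B) x α t

end Duhamel

section PosSemidefCone

open scoped ComplexOrder RealInnerProductSpace

variable {m n 𝕜 : Type*} [RCLike 𝕜]

lemma isClosed_setOf_posSemidef : IsClosed {x : Matrix n n 𝕜 | x.PosSemidef} := by
  simp only [Matrix.PosSemidef, Matrix.IsHermitian, Finsupp.sum, Set.ofPred_and, Set.ofPred_forall]
  exact (isClosed_eq (by fun_prop) continuous_id).inter <|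
    isClosed_iInter fun v ↦ isClosed_le continuous_const (by fun_prop)

variable (n 𝕜) in
/-- The closed convex cone of positive semidefinite Hermitian matrices, inside the real vector
space of all matrices. -/
def posSemidefCone : ProperCone ℝ (Matrix n n 𝕜) where
  carrier := {x | x.PosSemidef}
  zero_mem' := Matrix.PosSemidef.zero
  add_mem' := Matrix.PosSemidef.add
  smul_mem' c _ hx := hx.smul c.2
  isClosed' := isClosed_setOf_posSemidef

lemma mem_posSemidefCone {x : Matrix n n 𝕜} : x ∈ posSemidefCone n 𝕜 ↔ x.PosSemidef := Iff.rfl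

variable [Fintype m] [Fintype n]

attribute [local instance] Matrix.frobeniusNormedAddCommGroup Matrix.frobeniusNormedSpace

/-- The real inner product `⟪x, y⟫ = Re Tr(xᴴ y)` on matrices, compatible with the Frobenius norm.
Its topology is definitionally the product topology, so that derivatives and limits
are the same for it and for the entrywise supremum norm. -/
noncomputable abbrev frobeniusInnerProductSpace : InnerProductSpace ℝ (Matrix m n 𝕜) where
  inner x y := RCLike.re (xᴴ * y).trace
  norm_sq_eq_re_inner x := by
    have hnorm : ‖x‖ ^ 2 = ∑ i, ∑ j, ‖x i j‖ ^ 2 := by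
      rw [Matrix.frobenius_norm_def, ← Real.sqrt_eq_rpow, Real.sq_sqrt (by positivity)]
      simp only [Real.rpow_two]
    rw [hnorm, Finset.sum_comm]
    simp [Matrix.trace, Matrix.mul_apply, RCLike.conj_mul]
  conj_inner_symm x y := by
    have hconj : (yᴴ * x).trace = star (xᴴ * y).trace := by
      simp [← Matrix.trace_conjTranspose]
    simp [hconj]
  add_left x y z := by simp [Matrix.add_mul]
  smul_left x y r := by simp [RCLike.smul_re]

attribute [local instance] frobeniusInnerProductSpace

lemma frobenius_inner_def (x y : Matrix m n 𝕜) : ⟪x, y⟫ = RCLike.re (xᴴ * y).trace := rfl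

lemma frobenius_inner_vecMulVec_star (v : m → 𝕜) (w : n → 𝕜) (y : Matrix m n 𝕜) :
    ⟪vecMulVec v (star w), y⟫ = RCLike.re (star v ⬝ᵥ (y *ᵥ w)) := by
  rw [frobenius_inner_def, Matrix.conjTranspose_vecMulVec, star_star, Matrix.vecMulVec_mul,
    Matrix.trace_vecMulVec, dotProduct_comm, Matrix.dotProduct_mulVec]

lemma dotProduct_add_conjTranspose_mulVec (y : Matrix n n 𝕜) (v : n → 𝕜) :
    star v ⬝ᵥ ((y + yᴴ) *ᵥ v) = 2 * (RCLike.re (star v ⬝ᵥ (y *ᵥ v)) : 𝕜) := by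
  have hconj : star v ⬝ᵥ (yᴴ *ᵥ v) = star (star v ⬝ᵥ (y *ᵥ v)) := by
    rw [Matrix.dotProduct_mulVec, ← Matrix.star_mulVec, Matrix.star_dotProduct]
  rw [Matrix.add_mulVec, dotProduct_add, hconj, ← RCLike.add_conj, RCLike.star_def]

lemma posSemidef_add_conjTranspose_of_mem_innerDual {y : Matrix n n 𝕜}
    (hy : y ∈ ProperCone.innerDual (posSemidefCone n 𝕜 : Set (Matrix n n 𝕜))) :
    (y + yᴴ).PosSemidef := by
  refine Matrix.posSemidef_iff_dotProduct_mulVec.2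
    ⟨Matrix.isHermitian_add_transpose_self y, fun v ↦ ?_⟩
  have hquad : 0 ≤ ⟪vecMulVec v (star v), y⟫ := hy (Matrix.posSemidef_vecMulVec_self_star v)
  rw [frobenius_inner_vecMulVec_star] at hquad
  rw [dotProduct_add_conjTranspose_mulVec]
  exact mul_nonneg zero_le_two (RCLike.ofReal_nonneg.2 hquad)

lemma re_trace_mul_add_conjTranspose {x : Matrix n n 𝕜} (hx : x.IsHermitian) (y : Matrix n n 𝕜) :
    RCLike.re (x * (y + yᴴ)).trace = 2 * ⟪x, y⟫ := by
  have hconj : (x * yᴴ).trace = star (x * y).trace := by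
    rw [← Matrix.trace_conjTranspose, Matrix.conjTranspose_mul, hx.eq, Matrix.trace_mul_comm]
  rw [Matrix.mul_add, Matrix.trace_add, hconj, frobenius_inner_def, hx.eq]
  simp [two_mul]

theorem isCrossPositive_posSemidefCone {B : Module.End ℝ (Matrix n n 𝕜)}
    (hBherm : ∀ x : Matrix n n 𝕜, x.IsHermitian → (B x).IsHermitian)
    (hstar : ∀ x₁ x₂ : Matrix n n 𝕜, x₁.PosSemidef → x₂.PosSemidef →
      RCLike.re (x₁ * x₂).trace = 0 → 0 ≤ RCLike.re (B x₁ * x₂).trace) :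
    IsCrossPositive (posSemidefCone n 𝕜) B := by
  intro x hx y hy hxy
  have hx : x.PosSemidef := mem_posSemidefCone.1 hx
  have hBxy := hstar x (y + yᴴ) hx (posSemidef_add_conjTranspose_of_mem_innerDual hy)
    (by rw [re_trace_mul_add_conjTranspose hx.isHermitian, hxy, mul_zero])
  rw [re_trace_mul_add_conjTranspose (hBherm x hx.isHermitian)] at hBxy
  linarith

theorem posSemidef_of_hasDerivAt {B : Module.End ℝ (Matrix n n 𝕜)}
    (hBherm : ∀ x : Matrix n n 𝕜, x.IsHermitian → (B x).IsHermitian)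
    (hstar : ∀ x₁ x₂ : Matrix n n 𝕜, x₁.PosSemidef → x₂.PosSemidef →
      RCLike.re (x₁ * x₂).trace = 0 → 0 ≤ RCLike.re (B x₁ * x₂).trace)
    {α : Matrix n n 𝕜} (hα : α.PosSemidef) {f : ℝ → Matrix n n 𝕜}
    (hf : ∀ t, HasDerivAt f (α + B (f t)) t) (h0 : (f 0).PosSemidef) {t : ℝ} (ht : 0 ≤ t) :
    (f t).PosSemidef :=
  IsCrossPositive.mem_of_hasDerivAt (A := LinearMap.toContinuousLinearMap B)
    (isCrossPositive_posSemidefCone hBherm hstar) hα hf h0 ht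

end PosSemidefCone

open scoped ComplexOrder in
theorem stmt_15_general {n 𝕜 : Type*} [Fintype n] [RCLike 𝕜] {B : Module.End ℝ (Matrix n n 𝕜)}
    (hBherm : ∀ x : Matrix n n 𝕜, x.IsHermitian → (B x).IsHermitian)
    (hstar : ∀ x₁ x₂ : Matrix n n 𝕜, x₁.PosSemidef → x₂.PosSemidef →
      RCLike.re (x₁ * x₂).trace = 0 → 0 ≤ RCLike.re (B x₁ * x₂).trace)
    {α x : Matrix n n 𝕜} (hα : α.PosSemidef) (hx : x.PosSemidef) {t : ℝ} (ht : 0 ≤ t) :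
    (duhamelSolution B α x t).PosSemidef :=
  posSemidef_of_hasDerivAt hBherm hstar hα (hasDerivAt_duhamelSolution B α x)
    ((duhamelSolution_zero B α x).symm ▸ hx) ht

/-- Let `B` be a linear endomorphism of the symmetric `d×d` matrices
satisfying condition (★). Then for `ᾱ, x` positive semidefinite and `t ≥ 0`, the matrix
`exp(tB)(x) + ∫₀ᵗ exp(sB)(ᾱ) ds` is positive semidefinite, where
`exp(tB) = Σ_k tᵏ Bᵏ / k!`; equivalently, the solution of `x'(t) = ᾱ + B(x(t))`, `x(0)=x`
stays in the positive semidefinite cone. -/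
theorem stmt_15 (d : ℕ) (B : Module.End ℝ (Matrix (Fin d) (Fin d) ℝ))
    (hBsymm : ∀ x : Matrix (Fin d) (Fin d) ℝ, x.IsSymm → (B x).IsSymm)
    (hstar : ∀ x₁ x₂ : Matrix (Fin d) (Fin d) ℝ, x₁.PosSemidef → x₂.PosSemidef →
      (x₁ * x₂).trace = 0 → 0 ≤ (B x₁ * x₂).trace)
    (α x : Matrix (Fin d) (Fin d) ℝ) (hα : α.PosSemidef) (hx : x.PosSemidef)
    (t : ℝ) (ht : 0 ≤ t) :
    Matrix.PosSemidef
      ((∑' k : ℕ, (t ^ k / (Nat.factorial k) : ℝ) • (B ^ k) x) +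
        ∫ s in (0:ℝ)..t, ∑' k : ℕ, (s ^ k / (Nat.factorial k) : ℝ) • (B ^ k) α) := by
  exact stmt_15_general hBsymm hstar hα hx ht
end
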